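/- arXiv:1812.10819 — 2 statements merged into one kernel-verified Lean document; each statement's English description precedes it below -/
import Mathlib

section
/- Let k be a Hilbertian field, L/k a finite Galois extension, G a finite group, and α : G → Gal(L/k) a surjective group homomorphism admitting a group-theoretic section. Then there exist a finite separable extension F of L and an isomorphism β : Aut(F/k) → G such that every σ ∈ Aut(F/k) maps L onto itself and σ|_L = α(β(σ)). -/
set_option synthInstance.maxHeartbeats 1000000
set_option maxHeartbeats 1000000

/-- A field `k` is *Hilbertian* if for every `n ≥ 1`, every finite collection of
polynomials `f i ∈ k[T₁,…,Tₙ][X]`, each irreducible and separable as a polynomial in `X`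
over the rational function field `k(T₁,…,Tₙ)`, and every nonzero `g ∈ k[T₁,…,Tₙ]`,
there is `t ∈ kⁿ` with `g t ≠ 0` such that each specialized polynomial `f i (t, X)` is
irreducible over `k` and separable. -/
def IsHilbertianField (k : Type) [Field k] : Prop :=
  ∀ (n : ℕ), 0 < n → ∀ (m : ℕ)
    (f : Fin m → Polynomial (MvPolynomial (Fin n) k))
    (g : MvPolynomial (Fin n) k), g ≠ 0 →
    (∀ i, Irreducible ((f i).map (algebraMap (MvPolynomial (Fin n) k)
          (FractionRing (MvPolynomial (Fin n) k)))) ∧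
        ((f i).map (algebraMap (MvPolynomial (Fin n) k)
          (FractionRing (MvPolynomial (Fin n) k)))).Separable) →
    ∃ t : Fin n → k, MvPolynomial.eval t g ≠ 0 ∧
      ∀ i, Irreducible ((f i).map (MvPolynomial.eval t)) ∧
        ((f i).map (MvPolynomial.eval t)).Separable

set_option synthInstance.maxHeartbeats 1000000
set_option maxHeartbeats 1000000
set_option linter.unusedSectionVars false

namespace HilbAux
open Polynomial

section spec
variable {R S E : Type} [CommRing R] [CommRing S] [IsDomain S] [Algebra R S]
  [Group E] [Fintype E] [DecidableEq E] (act : E →* (S ≃ₐ[R] S))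

theorem lift_poly (hinv : ∀ s : S, (∀ e, act e s = s) → ∃ r : R, algebraMap R S r = s)
    (p : S[X]) (hp : ∀ e, p.map ((act e : S ≃ₐ[R] S) : S →+* S) = p) :
    ∃ q : R[X], q.map (algebraMap R S) = p := by
  have : p ∈ Polynomial.lifts (algebraMap R S) := by
    rw [Polynomial.lifts_iff_coeff_lifts]
    intro n
    apply hinv
    intro e
    conv_rhs => rw [← hp e]
    rw [Polynomial.coeff_map]; rfl
  exact (Polynomial.mem_lifts _).1 this

noncomputable def orb (z : S) : S[X] := ∏ e : E, (X - C (act e z))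

noncomputable def lag (z s : S) : S[X] :=
  ∑ e : E, C (act e s) * ∏ e' ∈ Finset.univ.erase e, (X - C (act e' z))

theorem orb_map (z : S) (f : E) :
    (orb act z).map ((act f : S ≃ₐ[R] S) : S →+* S) = orb act z := by
  unfold orb
  rw [Polynomial.map_prod]
  refine Fintype.prod_equiv (Equiv.mulLeft f) _ _ ?_
  intro e
  simp [map_mul]

theorem lag_map (z s : S) (f : E) :
    (lag act z s).map ((act f : S ≃ₐ[R] S) : S →+* S) = lag act z s := by
  unfold lag
  rw [Polynomial.map_sum]
  refine Fintype.sum_equiv (Equiv.mulLeft f) _ _ ?_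
  intro e
  rw [Polynomial.map_mul, Polynomial.map_prod]
  congr 1
  · simp [map_mul]
  · refine Finset.prod_equiv (Equiv.mulLeft f) ?_ ?_
    · intro i; simp
    · intro i _; simp [map_mul]

theorem orb_monic (z : S) : (orb act z).Monic :=
  monic_prod_of_monic _ _ fun _ _ => monic_X_sub_C _

theorem orb_natDegree (z : S) : (orb act z).natDegree = Fintype.card E := by
  unfold orb
  rw [natDegree_prod_of_monic _ _ fun _ _ => monic_X_sub_C _]
  simp

theorem lag_eval (z s : S) :
    (lag act z s).eval z = s * (derivative (orb act z)).eval z := by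
  have key : ∀ e : E, e ≠ 1 →
      (∏ e' ∈ Finset.univ.erase e, (X - C (act e' z))).eval z = 0 := by
    intro e he
    rw [eval_prod]
    refine Finset.prod_eq_zero (i := 1) (by simp [he.symm]) (by simp)
  unfold lag orb
  rw [derivative_prod_finset, eval_finsetSum, eval_finsetSum, Finset.sum_eq_single 1,
    Finset.sum_eq_single 1]
  · simp
  · intro e _ he
    simp only [eval_mul, key e he, zero_mul]
  · simp
  · intro e _ he
    simp only [eval_mul, key e he, mul_zero]
  · simp

theorem deriv_orb_ne (z : S) (hz : Function.Injective fun e => act e z) :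
    (derivative (orb act z)).eval z ≠ 0 := by
  unfold orb
  rw [derivative_prod_finset, eval_finsetSum, Finset.sum_eq_single 1]
  · simp only [eval_mul, eval_prod]
    simp only [eval_sub, eval_X, eval_C, derivative_sub, derivative_X, derivative_C, sub_zero,
      eval_one, mul_one]
    rw [Finset.prod_ne_zero_iff]
    intro e he h
    have : act 1 z = act e z := by simpa [sub_eq_zero] using h
    exact (Finset.mem_erase.1 he).1 (hz this).symm
  · intro e _ he
    simp only [eval_mul, eval_prod]
    rw [Finset.prod_eq_zero (i := 1) (by simp [he.symm]) (by simp), zero_mul]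
  · simp

end spec
theorem exists_distinct {R S E : Type} [Group E] [Fintype E] {k : Type} [Field k] [Infinite k] [CommRing R] [CommRing S] [Algebra R S]
    [Algebra k R] [Algebra k S] [IsScalarTower k R S]
    (act : E →* (S ≃ₐ[R] S))
    (hact : Function.Injective act) : ∃ z : S, Function.Injective fun e => act e z := by
  classical
  let V : E → Subspace k S := fun e =>
    LinearMap.eqLocus ((act e : S ≃ₐ[R] S).toLinearMap.restrictScalars k) LinearMap.id
  have h := Subspace.biUnion_ne_univ_of_top_notMem (k := k)
    (s := (Finset.univ.filter (fun e : E => e ≠ 1)).image V) (by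
      intro h
      obtain ⟨e, he, hV⟩ := Finset.mem_image.1 h
      apply (Finset.mem_filter.1 he).2
      apply hact
      rw [map_one]
      ext s
      have : s ∈ V e := by rw [hV]; trivial
      exact this)
  obtain ⟨z, hz⟩ := (Set.ne_univ_iff_exists_notMem _).1 h
  refine ⟨z, ?_⟩
  intro e f hef
  by_contra hne
  apply hz
  simp only [Set.mem_iUnion]
  refine ⟨V (f⁻¹ * e), Finset.mem_image.2 ⟨f⁻¹ * e, ?_, rfl⟩, ?_⟩
  · simp only [Finset.mem_filter, Finset.mem_univ, true_and]
    intro h; exact hne (by rw [inv_mul_eq_one] at h; exact h.symm)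
  · change act (f⁻¹ * e) z = z
    have : act e z = act f z := hef
    rw [map_mul, AlgEquiv.mul_apply, this, ← AlgEquiv.mul_apply, ← map_mul]
    simp

theorem infinite_of_hilb {k : Type} [Field k] (hk : IsHilbertianField k) : Infinite k := by
  by_contra hfin
  rw [not_infinite_iff_finite] at hfin
  have := Fintype.ofFinite k
  obtain ⟨t, ht, -⟩ := hk 1 one_pos 0 (fun i => i.elim0)
    (∏ a : k, (MvPolynomial.X 0 - MvPolynomial.C a)) (by
      rw [Finset.prod_ne_zero_iff]
      intro a _ h
      have := congrArg (MvPolynomial.eval (fun _ => a + 1)) h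
      simp at this) (fun i => i.elim0)
  apply ht
  rw [map_prod]
  exact Finset.prod_eq_zero (Finset.mem_univ (t 0)) (by simp)
end HilbAux

set_option synthInstance.maxHeartbeats 1000000
set_option maxHeartbeats 1000000
set_option linter.unusedSectionVars false

namespace HilbAux
open Polynomial

theorem ext_hom {k R S : Type} [Field k] [CommRing R] [CommRing S] [IsDomain S] [Algebra k R]
    [Algebra k S] [Algebra R S] [IsScalarTower k R S]
    (hinj : Function.Injective (algebraMap R S)) [Algebra.IsIntegral R S] (t : R →ₐ[k] k) :
    ∃ φ : S →ₐ[k] AlgebraicClosure k,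
      ∀ r, φ (algebraMap R S r) = algebraMap k (AlgebraicClosure k) (t r) := by
  have : FaithfulSMul R S := (faithfulSMul_iff_algebraMap_injective R S).2 hinj
  have hpr : (RingHom.ker t).IsPrime := RingHom.ker_isPrime t
  obtain ⟨Q, -, hQ, hQc⟩ := Ideal.exists_ideal_over_prime_of_isIntegral (S := S)
    (RingHom.ker t) ⊥ (by
      intro x hx
      rw [Ideal.mem_comap, Ideal.mem_bot] at hx
      rw [hinj (hx.trans (map_zero _).symm)]
      exact zero_mem _)
  have key : ∀ r : R, Ideal.Quotient.mkₐ k Q (algebraMap R S r) = algebraMap k (S ⧸ Q) (t r) := by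
    intro r
    have h1 : r - algebraMap k R (t r) ∈ Q.comap (algebraMap R S) := by
      rw [hQc, RingHom.mem_ker]; simp
    rw [Ideal.mem_comap, map_sub] at h1
    have h2 := (Ideal.Quotient.eq (I := Q)).2 h1
    rw [← IsScalarTower.algebraMap_apply] at h2
    exact h2
  have hint : Algebra.IsIntegral k (S ⧸ Q) := by
    constructor
    intro x
    obtain ⟨s, rfl⟩ := Ideal.Quotient.mkₐ_surjective k Q x
    obtain ⟨p, hp, hp0⟩ := Algebra.IsIntegral.isIntegral (R := R) s
    refine ⟨p.map (t : R →+* k), hp.map _, ?_⟩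
    rw [eval₂_map]
    have : (algebraMap k (S ⧸ Q)).comp (t : R →+* k)
        = ((Ideal.Quotient.mkₐ k Q : S →ₐ[k] S ⧸ Q) : S →+* S ⧸ Q).comp (algebraMap R S) := by
      ext r; exact (key r).symm
    rw [this]
    have h3 := congrArg (Ideal.Quotient.mkₐ k Q) hp0
    rw [map_zero] at h3
    rw [← h3]
    exact (Polynomial.hom_eval₂ p (algebraMap R S) ((Ideal.Quotient.mkₐ k Q : S →ₐ[k] S ⧸ Q) : S →+* S ⧸ Q) s).symm
  have : Algebra.IsAlgebraic k (S ⧸ Q) := inferInstance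
  let ψ : (S ⧸ Q) →ₐ[k] AlgebraicClosure k := IsAlgClosed.lift
  refine ⟨ψ.comp (Ideal.Quotient.mkₐ k Q), ?_⟩
  intro r
  rw [AlgHom.comp_apply, key, AlgHom.commutes]

section
variable {k S E : Type} [Field k] {n : ℕ} [CommRing S] [IsDomain S]
  [Algebra k S] [Algebra (MvPolynomial (Fin n) k) S] [IsScalarTower k (MvPolynomial (Fin n) k) S]
  [Group E] [Fintype E] [DecidableEq E] (act : E →* (S ≃ₐ[MvPolynomial (Fin n) k] S))

theorem orb_lift_irred {R S E : Type} [CommRing R] [IsDomain R] [CommRing S] [IsDomain S]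
    [Algebra R S] [Group E] [Fintype E] [DecidableEq E] (act : E →* (S ≃ₐ[R] S))
    (hinj : Function.Injective (algebraMap R S)) (z : S)
    (hz : Function.Injective fun e => act e z) (P : R[X])
    (hP : P.map (algebraMap R S) = orb act z) : P.Monic ∧ Irreducible P ∧ derivative P ≠ 0 := by
  classical
  have hm : P.Monic := monic_of_injective hinj (by rw [hP]; exact orb_monic act z)
  have hdeg : P.natDegree = Fintype.card E := by
    rw [← orb_natDegree act z, ← hP, natDegree_map_eq_of_injective hinj]
  have hz0 : aeval z P = 0 := by
    rw [aeval_def, ← eval_map, hP, orb, eval_prod]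
    exact Finset.prod_eq_zero (Finset.mem_univ 1) (by simp)
  have big : ∀ f : R[X], f.Monic → aeval z f = 0 → Fintype.card E ≤ f.natDegree := by
    intro f hf h0
    have h1 : (Finset.univ.image fun e => act e z).card ≤ (f.map (algebraMap R S)).natDegree := by
      apply Polynomial.card_le_degree_of_subset_roots
      intro x hx
      rw [Finset.mem_val] at hx
      obtain ⟨e, -, rfl⟩ := Finset.mem_image.1 hx
      rw [mem_roots (hf.map _).ne_zero, IsRoot.def, eval_map_algebraMap]
      rw [← AlgEquiv.coe_toAlgHom, Polynomial.aeval_algHom_apply, h0, map_zero]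
    rw [Finset.card_image_of_injective _ hz, natDegree_map_eq_of_injective hinj] at h1
    exact h1
  refine ⟨hm, ?_, ?_⟩
  · refine (Monic.irreducible_iff_natDegree hm).2 ⟨?_, ?_⟩
    · rintro rfl
      simp at hz0
    · intro f g hf hg hfg
      have hd : f.natDegree + g.natDegree = Fintype.card E := by
        rw [← hdeg, ← hfg, hf.natDegree_mul hg]
      rw [← hfg, map_mul, mul_eq_zero] at hz0
      rcases hz0 with h | h
      · right; have := big f hf h; omega
      · left; have := big g hg h; omega
  · intro h
    apply deriv_orb_ne act z hz
    rw [← hP, derivative_map, h]; simp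

theorem hilb_step (hk : IsHilbertianField k) (hn : 0 < n)
    (hinj : Function.Injective (algebraMap (MvPolynomial (Fin n) k) S))
    (hact : Function.Injective act)
    (hinv : ∀ s : S, (∀ e, act e s = s) →
      ∃ r : MvPolynomial (Fin n) k, algebraMap (MvPolynomial (Fin n) k) S r = s)
    (s0 : S) (hs0 : s0 ≠ 0) :
    ∃ (z : S) (P : (MvPolynomial (Fin n) k)[X]) (t : Fin n → k),
      (Function.Injective fun e => act e z) ∧
      P.map (algebraMap (MvPolynomial (Fin n) k) S) = orb act z ∧ P.Monic ∧
      Irreducible (P.map (MvPolynomial.eval t)) ∧ (P.map (MvPolynomial.eval t)).Separable ∧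
      ∃ g : MvPolynomial (Fin n) k, MvPolynomial.eval t g ≠ 0 ∧
        algebraMap (MvPolynomial (Fin n) k) S g = ∏ e, act e s0 := by
  have := infinite_of_hilb hk
  obtain ⟨z, hz⟩ := exists_distinct (k := k) act hact
  obtain ⟨P, hP⟩ := lift_poly act hinv (orb act z) (orb_map act z)
  obtain ⟨hm, hirr, hder⟩ := orb_lift_irred act hinj z hz P hP
  obtain ⟨g, hg⟩ := hinv (∏ e, act e s0) (by
    intro f
    rw [map_prod]
    refine Fintype.prod_equiv (Equiv.mulLeft f) _ _ ?_
    intro e; simp [map_mul])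
  have hg0 : g ≠ 0 := by
    rintro rfl
    rw [map_zero] at hg
    obtain ⟨e, -, he⟩ := Finset.prod_eq_zero_iff.1 hg.symm
    exact hs0 ((map_eq_zero_iff _ (act e).injective).1 he)
  have hirr' := (Monic.irreducible_iff_irreducible_map_fraction_map
    (K := FractionRing (MvPolynomial (Fin n) k)) hm).1 hirr
  obtain ⟨t, ht, h⟩ := hk n hn 1 (fun _ => P) g hg0 (fun _ => ⟨hirr', by
    rw [separable_iff_derivative_ne_zero hirr', derivative_map]
    rwa [Ne, Polynomial.map_eq_zero_iff (IsFractionRing.injective _ _)]⟩)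
  exact ⟨z, P, t, hz, hP, hm, (h 0).1, (h 0).2, g, ht, hg⟩

theorem spec_hom (hk : IsHilbertianField k) (hn : 0 < n)
    (hinj : Function.Injective (algebraMap (MvPolynomial (Fin n) k) S))
    (hact : Function.Injective act)
    (hinv : ∀ s : S, (∀ e, act e s = s) →
      ∃ r : MvPolynomial (Fin n) k, algebraMap (MvPolynomial (Fin n) k) S r = s)
    (s0 : S) (hs0 : s0 ≠ 0)
    (L : IntermediateField k (AlgebraicClosure k)) [Normal k L] (jL : L →ₐ[k] S) :
    ∃ (φ : S →ₐ[k] AlgebraicClosure k), φ s0 ≠ 0 ∧ (∀ x : L, φ (jL x) = x) ∧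
    ∃ (N : IntermediateField k (AlgebraicClosure k)), FiniteDimensional k N ∧ IsGalois k N ∧
    ∃ hN : ∀ s, φ s ∈ N, ∃ ρ : (N ≃ₐ[k] N) ≃* E, ∀ τ s,
      ((τ ⟨φ s, hN s⟩ : N) : AlgebraicClosure k) = φ (act (ρ τ) s) := by
  obtain ⟨z, P, t, hz, hP, hm, hirr, hsep, g, hg, hgs⟩ :=
    hilb_step act hk hn hinj hact hinv s0 hs0
  have hint : Algebra.IsIntegral (MvPolynomial (Fin n) k) S := by
    constructor
    intro s
    obtain ⟨q, hq⟩ := lift_poly act hinv (orb act s) (orb_map act s)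
    refine ⟨q, monic_of_injective hinj (by rw [hq]; exact orb_monic act s), ?_⟩
    rw [← eval_map, hq, orb, eval_prod]
    exact Finset.prod_eq_zero (Finset.mem_univ 1) (by simp)
  obtain ⟨φ, hφt, hφL⟩ : ∃ φ : S →ₐ[k] AlgebraicClosure k,
      (∀ r : MvPolynomial (Fin n) k, φ (algebraMap (MvPolynomial (Fin n) k) S r) = algebraMap k (AlgebraicClosure k) (MvPolynomial.eval t r)) ∧
      (∀ x : L, φ (jL x) = x) := by
    obtain ⟨φ0, h0⟩ := ext_hom (k := k) hinj (MvPolynomial.aeval t)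
    let γ : L ≃ₐ[k] L := AlgHom.restrictNormal' (φ0.comp jL) L
    have hγ : ∀ x : L, ((γ x : L) : AlgebraicClosure k) = φ0 (jL x) := by
      intro x
      exact AlgHom.restrictNormal_commutes (φ0.comp jL) L x
    let g : AlgebraicClosure k ≃ₐ[k] AlgebraicClosure k := γ.symm.liftNormal (AlgebraicClosure k)
    refine ⟨(g : AlgebraicClosure k →ₐ[k] AlgebraicClosure k).comp φ0, ?_, ?_⟩
    · intro r
      change g (φ0 _) = _
      rw [h0, AlgEquiv.commutes, MvPolynomial.aeval_eq_eval]
    · intro x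
      have h1 := AlgEquiv.liftNormal_commutes γ.symm (AlgebraicClosure k) (γ x)
      rw [AlgEquiv.symm_apply_apply] at h1
      change g (φ0 (jL x)) = x
      rw [← hγ]
      exact h1
  set Pt : k[X] := P.map (MvPolynomial.eval t) with hPt
  -- evaluation through a hom
  have hev : ∀ (ψ : S →ₐ[k] AlgebraicClosure k),
      (∀ r : MvPolynomial (Fin n) k, ψ (algebraMap (MvPolynomial (Fin n) k) S r) = algebraMap k (AlgebraicClosure k) (MvPolynomial.eval t r)) →
      ∀ (q : (MvPolynomial (Fin n) k)[X]) (x : S),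
        ψ ((q.map (algebraMap (MvPolynomial (Fin n) k) S)).eval x) = aeval (ψ x) (q.map (MvPolynomial.eval t)) := by
    intro ψ hψ q x
    rw [aeval_def, eval₂_map, eval_map]
    have := Polynomial.hom_eval₂ q (algebraMap (MvPolynomial (Fin n) k) S) (ψ : S →+* AlgebraicClosure k) x
    refine this.trans ?_
    congr 1
    refine RingHom.ext fun r => ?_
    have h2 := hψ r
    exact h2
  have hroot : ∀ (ψ : S →ₐ[k] AlgebraicClosure k),
      (∀ r : MvPolynomial (Fin n) k, ψ (algebraMap (MvPolynomial (Fin n) k) S r) = algebraMap k (AlgebraicClosure k) (MvPolynomial.eval t r)) →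
      aeval (ψ z) Pt = 0 := by
    intro ψ hψ
    rw [← hev ψ hψ, hP, orb, eval_prod, map_prod]
    exact Finset.prod_eq_zero (Finset.mem_univ 1) (by simp)
  have hlag : ∀ s : S, ∃ q : k[X], ∀ (ψ : S →ₐ[k] AlgebraicClosure k),
      (∀ r : MvPolynomial (Fin n) k, ψ (algebraMap (MvPolynomial (Fin n) k) S r) = algebraMap k (AlgebraicClosure k) (MvPolynomial.eval t r)) →
      ψ s = aeval (ψ z) q / aeval (ψ z) (derivative Pt) := by
    intro s
    obtain ⟨q, hq⟩ := lift_poly act hinv (lag act z s) (lag_map act z s)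
    refine ⟨q.map (MvPolynomial.eval t), ?_⟩
    intro ψ hψ
    have hd : aeval (ψ z) (derivative Pt) ≠ 0 := hsep.aeval_derivative_ne_zero (hroot ψ hψ)
    rw [eq_div_iff hd, ← hev ψ hψ, hq, lag_eval, map_mul, hPt, derivative_map,
      ← hev ψ hψ, ← hP, derivative_map]
  have hPfac : Pt.map (algebraMap k (AlgebraicClosure k)) = ∏ e, (X - C (φ (act e z))) := by
    have h1 : Pt.map (algebraMap k (AlgebraicClosure k)) =
        (P.map (algebraMap (MvPolynomial (Fin n) k) S)).map (φ : S →+* AlgebraicClosure k) := by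
      rw [hPt, Polynomial.map_map, Polynomial.map_map]
      congr 1
      refine RingHom.ext fun r => ?_
      have h2 := hφt r
      exact h2.symm
    rw [h1, hP, orb, Polynomial.map_prod]
    simp
  have hconj : ∀ y : AlgebraicClosure k, aeval y Pt = 0 → ∃ e, y = φ (act e z) := by
    intro y hy
    rw [aeval_def, ← eval_map, hPfac, eval_prod, Finset.prod_eq_zero_iff] at hy
    obtain ⟨e, -, he⟩ := hy
    exact ⟨e, by simpa [sub_eq_zero] using he⟩
  have hφinj : Function.Injective fun e => φ (act e z) := by
    have h1 : (∏ e, (X - C (φ (act e z)))).Separable := by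
      rw [← hPfac]; exact hsep.map
    rw [← separable_prod_X_sub_C_iff]; exact h1
  have hPtm : Pt.Monic := hm.map _
  have hzint : IsIntegral k (φ z) := ⟨Pt, hPtm, hroot φ hφt⟩
  have hmin : minpoly k (φ z) = Pt :=
    (minpoly.eq_of_irreducible_of_monic hirr (hroot φ hφt) hPtm).symm
  let N : IntermediateField k (AlgebraicClosure k) := IntermediateField.adjoin k {φ z}
  have hN : ∀ s, φ s ∈ N := by
    intro s
    obtain ⟨q, hq⟩ := hlag s
    rw [hq φ hφt]
    have hzN : φ z ∈ N := IntermediateField.mem_adjoin_simple_self k (φ z)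
    refine div_mem ?_ ?_
    · exact IntermediateField.algebra_adjoin_le_adjoin k _ (Polynomial.aeval_mem_adjoin_singleton k (φ z))
    · exact IntermediateField.algebra_adjoin_le_adjoin k _ (Polynomial.aeval_mem_adjoin_singleton k (φ z))
  have hNfin : FiniteDimensional k N := IntermediateField.adjoin.finiteDimensional hzint
  have hNsep : Algebra.IsSeparable k N := by
    rw [IntermediateField.isSeparable_adjoin_simple_iff_isSeparable]
    rw [IsSeparable, hmin]; exact hsep
  have hNnor : Normal k N := by
    rw [IntermediateField.normal_iff_forall_map_le]
    intro σ
    rw [IntermediateField.adjoin_map, IntermediateField.adjoin_le_iff]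
    rintro _ ⟨_, rfl, rfl⟩
    obtain ⟨e, he⟩ := hconj (σ (φ z)) (by
      rw [Polynomial.aeval_algHom_apply, hroot φ hφt, map_zero])
    change σ (φ z) ∈ N
    rw [he]; exact hN _
  have hNgal : IsGalois k N := ⟨⟩
  have hact2 : ∀ e r, act e (algebraMap (MvPolynomial (Fin n) k) S r) = algebraMap (MvPolynomial (Fin n) k) S r :=
    fun e r => (act e).commutes r
  have hrho : ∀ τ : N ≃ₐ[k] N, ∃ e : E, ∀ s,
      ((τ ⟨φ s, hN s⟩ : N) : AlgebraicClosure k) = φ (act e s) := by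
    intro τ
    let ψ : S →ₐ[k] AlgebraicClosure k :=
      (N.val.comp (τ : N →ₐ[k] N)).comp (φ.codRestrict N.toSubalgebra hN)
    have hψs : ∀ s, ψ s = ((τ ⟨φ s, hN s⟩ : N) : AlgebraicClosure k) := fun s => rfl
    have hψ : ∀ r : MvPolynomial (Fin n) k, ψ (algebraMap (MvPolynomial (Fin n) k) S r) =
        algebraMap k (AlgebraicClosure k) (MvPolynomial.eval t r) := by
      intro r
      rw [hψs]
      have : (⟨φ (algebraMap (MvPolynomial (Fin n) k) S r), hN _⟩ : N) = algebraMap k N (MvPolynomial.eval t r) := by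
        apply Subtype.ext; exact hφt r
      rw [this, AlgEquiv.commutes]; rfl
    obtain ⟨e, he⟩ := hconj (ψ z) (hroot ψ hψ)
    refine ⟨e, fun s => ?_⟩
    obtain ⟨q, hq⟩ := hlag s
    let φe : S →ₐ[k] AlgebraicClosure k := φ.comp ((act e).toAlgHom.restrictScalars k)
    have hφe : ∀ r : MvPolynomial (Fin n) k, φe (algebraMap (MvPolynomial (Fin n) k) S r) =
        algebraMap k (AlgebraicClosure k) (MvPolynomial.eval t r) := by
      intro r
      change φ (act e (algebraMap (MvPolynomial (Fin n) k) S r)) = _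
      rw [hact2, hφt]
    have h1 := hq φe hφe
    have h2 := hq ψ hψ
    have h3 : φe z = ψ z := he.symm
    rw [← hψs, h2, ← h3, ← h1]; rfl
  choose ρ hρ using hrho
  let ρh : (N ≃ₐ[k] N) →* E := MonoidHom.mk' ρ (by
    intro a b
    apply hφinj
    change φ (act (ρ (a * b)) z) = φ (act (ρ a * ρ b) z)
    rw [← hρ, map_mul, AlgEquiv.mul_apply, AlgEquiv.mul_apply, ← hρ]
    congr 2
    apply Subtype.ext
    exact hρ b z)
  have hρinj : Function.Injective ρh := by
    rw [injective_iff_map_eq_one]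
    intro τ hτ
    have h1 : ((τ ⟨φ z, hN z⟩ : N) : AlgebraicClosure k) = φ z := by
      rw [hρ]
      change φ (act (ρh τ) z) = _
      rw [hτ]; simp
    have h2 : (τ : N →ₐ[k] N) = AlgHom.id k N := by
      refine IntermediateField.algHom_ext_of_eq_adjoin k (S := N) (s := {φ z}) rfl ?_
      rintro x hx
      obtain rfl : x = φ z := hx
      apply Subtype.ext
      exact h1
    ext x
    have := congrArg (fun f : N →ₐ[k] N => ((f x : N) : AlgebraicClosure k)) h2
    exact this
  have hcard : Nat.card (N ≃ₐ[k] N) = Nat.card E := by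
    rw [IsGalois.card_aut_eq_finrank, IntermediateField.adjoin.finrank hzint, hmin, hPt,
      hm.natDegree_map, Nat.card_eq_fintype_card, ← orb_natDegree act z, ← hP, hm.natDegree_map]
  have hρbij : Function.Bijective ρh :=
    (Nat.bijective_iff_injective_and_card ρh).2 ⟨hρinj, hcard⟩
  refine ⟨φ, ?_, hφL, N, hNfin, hNgal, hN, MulEquiv.ofBijective ρh hρbij, hρ⟩
  intro h0
  apply hg
  have h1 := hφt g
  rw [hgs, map_prod, Finset.prod_eq_zero (Finset.mem_univ 1) (by simpa using h0)] at h1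
  exact (map_eq_zero_iff _ (algebraMap k (AlgebraicClosure k)).injective).1 h1.symm
end
end HilbAux

set_option synthInstance.maxHeartbeats 1000000
set_option maxHeartbeats 1000000
set_option linter.unusedSectionVars false

namespace HilbAux
open Polynomial

noncomputable def semi {k G L : Type} [Field k] [Field L] [Algebra k L]
    (e : Equiv.Perm G × (L ≃ₐ[k] L)) : MvPolynomial G L →+* MvPolynomial G L :=
  ((MvPolynomial.rename e.1 : MvPolynomial G L →ₐ[L] MvPolynomial G L) :
    MvPolynomial G L →+* MvPolynomial G L).comp
    (MvPolynomial.map ((e.2 : L ≃ₐ[k] L) : L →+* L))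

theorem semi_C {k G L : Type} [Field k] [Field L] [Algebra k L]
    (e : Equiv.Perm G × (L ≃ₐ[k] L)) (x : L) :
    semi e (MvPolynomial.C x) = MvPolynomial.C (e.2 x) := by
  simp [semi]

theorem semi_X {k G L : Type} [Field k] [Field L] [Algebra k L]
    (e : Equiv.Perm G × (L ≃ₐ[k] L)) (g : G) :
    semi e (MvPolynomial.X g) = MvPolynomial.X (e.1 g) := by
  simp [semi]

noncomputable def esHom (k G L : Type) [Field k] [Field L] [Algebra k L] [Fintype G] (n : ℕ) :
    MvPolynomial (Fin n) k →ₐ[k] MvPolynomial G L :=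
  MvPolynomial.aeval fun i : Fin n => MvPolynomial.esymm G L (i + 1)

theorem semi_esHom {k G L : Type} [Field k] [Field L] [Algebra k L] [Fintype G] (n : ℕ)
    (e : Equiv.Perm G × (L ≃ₐ[k] L)) (r : MvPolynomial (Fin n) k) :
    semi e (esHom k G L n r) = esHom k G L n r := by
  have : (semi e).comp (esHom k G L n : MvPolynomial (Fin n) k →+* MvPolynomial G L)
      = (esHom k G L n : MvPolynomial (Fin n) k →+* MvPolynomial G L) := by
    apply MvPolynomial.ringHom_ext
    · intro a
      simp only [RingHom.comp_apply, RingHom.coe_coe]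
      rw [← MvPolynomial.algebraMap_eq, AlgHom.commutes, IsScalarTower.algebraMap_apply k L,
        MvPolynomial.algebraMap_eq, semi_C]
      simp
    · intro i
      simp [esHom, semi, MvPolynomial.map_esymm, MvPolynomial.rename_esymm]
  exact congrArg (fun f => f r) this

theorem esHom_factor {k G L : Type} [Field k] [Field L] [Algebra k L] [Fintype G] (n : ℕ)
    (r : MvPolynomial (Fin n) k) :
    esHom k G L n r = esHom L G L n (MvPolynomial.map (algebraMap k L) r) := by
  unfold esHom
  rw [MvPolynomial.aeval_map_algebraMap]

theorem esHom_inj {L G : Type} [Field L] [Fintype G] (n : ℕ) (hn : Fintype.card G = n) :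
    Function.Injective (esHom L G L n) := by
  intro a b hab
  apply MvPolynomial.esymmAlgHom_injective (σ := G) L hn.ge
  apply Subtype.ext
  rw [MvPolynomial.esymmAlgHom_apply, MvPolynomial.esymmAlgHom_apply]
  exact hab

theorem esHom_surj {L G : Type} [Field L] [Fintype G] (n : ℕ) (hn : Fintype.card G = n)
    (p : MvPolynomial G L) (hp : p.IsSymmetric) : ∃ q, esHom L G L n q = p := by
  obtain ⟨q, hq⟩ := MvPolynomial.esymmAlgHom_surjective (σ := G) L hn.le ⟨p, hp⟩
  refine ⟨q, ?_⟩
  have := congrArg Subtype.val hq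
  rw [MvPolynomial.esymmAlgHom_apply] at this
  exact this

theorem semi_esHom_L {k G L : Type} [Field k] [Field L] [Algebra k L] [Fintype G] (n : ℕ)
    (γ : L ≃ₐ[k] L) (r : MvPolynomial (Fin n) L) :
    semi ((1 : Equiv.Perm G), γ) (esHom L G L n r) =
      esHom L G L n (MvPolynomial.map (γ : L →+* L) r) := by
  have : (semi ((1 : Equiv.Perm G), γ)).comp (esHom L G L n : MvPolynomial (Fin n) L →+* MvPolynomial G L)
      = (esHom L G L n : MvPolynomial (Fin n) L →+* MvPolynomial G L).comp
        (MvPolynomial.map (γ : L →+* L)) := by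
    apply MvPolynomial.ringHom_ext
    · intro a
      simp [semi, esHom]
    · intro i
      simp [esHom, semi, MvPolynomial.map_esymm, MvPolynomial.rename_esymm]
  exact congrArg (fun f => f r) this

theorem semi_inv {k G L : Type} [Field k] [Field L] [Algebra k L] [FiniteDimensional k L]
    [IsGalois k L] [Fintype G] (n : ℕ) (hn : Fintype.card G = n) (p : MvPolynomial G L)
    (hp : ∀ e : Equiv.Perm G × (L ≃ₐ[k] L), semi e p = p) : ∃ r, esHom k G L n r = p := by
  obtain ⟨q, rfl⟩ := esHom_surj n hn p (by
    intro π
    have := hp (π, 1)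
    simp only [semi, RingHom.comp_apply] at this
    have h1 : MvPolynomial.map ((1 : L ≃ₐ[k] L) : L →+* L) p = p := MvPolynomial.map_id p
    rw [h1] at this
    exact this)
  have h2 : ∀ γ : L ≃ₐ[k] L, MvPolynomial.map (γ : L →+* L) q = q := by
    intro γ
    apply esHom_inj n hn
    rw [← semi_esHom_L, hp]
  have h3 : q ∈ Set.range (MvPolynomial.map (σ := Fin n) (algebraMap k L)) := by
    rw [MvPolynomial.mem_range_map_iff_coeffs_subset]
    intro c hc
    obtain ⟨m, -, rfl⟩ := MvPolynomial.mem_coeffs_iff.1 hc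
    rw [IsGalois.mem_range_algebraMap_iff_fixed]
    intro γ
    conv_rhs => rw [← h2 γ]
    rw [MvPolynomial.coeff_map]; rfl
  obtain ⟨r, rfl⟩ := h3
  exact ⟨r, esHom_factor n r⟩

theorem step1 {k : Type} [Field k] (hk : IsHilbertianField k)
    (G : Type) [Group G] [Finite G]
    (L : IntermediateField k (AlgebraicClosure k))
    [FiniteDimensional k L] [IsGalois k L] (α : G →* (L ≃ₐ[k] L)) :
    ∃ (M : IntermediateField k (AlgebraicClosure k)) (hLM : L ≤ M),
      FiniteDimensional k M ∧ IsGalois k M ∧ ∃ j : G →* (M ≃ₐ[k] M), Function.Injective j ∧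
        ∀ g x (hx : x ∈ L), ((j g ⟨x, hLM hx⟩ : M) : AlgebraicClosure k) =
            ((α g ⟨x, hx⟩ : L) : AlgebraicClosure k) := by
  classical
  have := Fintype.ofFinite G
  let n := Fintype.card G
  have hn : 0 < n := Fintype.card_pos
  let R := MvPolynomial (Fin n) k
  let S := MvPolynomial G L
  letI : Algebra R S := (esHom k G L n).toRingHom.toAlgebra
  have halg : ∀ r, algebraMap R S r = esHom k G L n r := fun _ => rfl
  haveI : IsScalarTower k R S := IsScalarTower.of_algebraMap_eq fun x => by
    rw [halg]; exact ((esHom k G L n).commutes x).symm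
  let E := Equiv.Perm G × (L ≃ₐ[k] L)
  let A : E →* (S →ₐ[R] S) :=
    { toFun := fun e => { semi e with commutes' := fun r => semi_esHom n e r }
      map_one' := by
        apply AlgHom.ext
        intro s
        change semi (1 : E) s = s
        have : semi (1 : E) = RingHom.id _ := by
          apply MvPolynomial.ringHom_ext
          · intro a; rw [semi_C]; rfl
          · intro i; rw [semi_X]; rfl
        rw [this]; rfl
      map_mul' := by
        intro a b
        apply AlgHom.ext
        intro s
        change semi (a * b) s = semi a (semi b s)
        have : semi (a * b) = (semi a).comp (semi b) := by
          apply MvPolynomial.ringHom_ext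
          · intro x; rw [RingHom.comp_apply, semi_C, semi_C, semi_C]; rfl
          · intro i; rw [RingHom.comp_apply, semi_X, semi_X, semi_X]; rfl
        rw [this]; rfl }
  let act : E →* (S ≃ₐ[R] S) := (AlgEquiv.algHomUnitsEquiv R S).toMonoidHom.comp A.toHomUnits
  have hact : ∀ e s, act e s = semi e s := fun e s => rfl
  have hactinj : Function.Injective act := by
    intro a b hab
    have h : ∀ s, semi a s = semi b s := fun s => by rw [← hact, ← hact, hab]
    refine Prod.ext ?_ ?_
    · ext g
      have := h (MvPolynomial.X g)
      rw [semi_X, semi_X] at this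
      exact MvPolynomial.X_injective this
    · ext x
      have := h (MvPolynomial.C x)
      rw [semi_C, semi_C] at this
      rw [MvPolynomial.C_injective _ _ this]
  have hRinj : Function.Injective (algebraMap R S) := by
    intro a b hab
    rw [halg, halg, esHom_factor (k := k) n a, esHom_factor (k := k) n b] at hab
    exact MvPolynomial.map_injective _ (algebraMap k L).injective (esHom_inj n rfl hab)
  haveI : Fintype (L ≃ₐ[k] L) := Fintype.ofFinite _
  let jL : L →ₐ[k] S := IsScalarTower.toAlgHom k L S
  obtain ⟨φ, -, hφL, M, hfin, hgal, hM, ρ, hρ⟩ := spec_hom (S := S) act hk hn hRinj hactinj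
    (fun s hs => semi_inv n rfl s hs) 1 one_ne_zero L jL
  have hLM : L ≤ M := fun x hx => by
    have := hM (jL ⟨x, hx⟩)
    rwa [hφL] at this
  let i : G →* E := (MulAction.toPermHom G G).prod α
  refine ⟨M, hLM, hfin, hgal, ρ.symm.toMonoidHom.comp i, ?_, ?_⟩
  · refine ρ.symm.injective.comp ?_
    intro a b hab
    have h1 : MulAction.toPermHom G G a = MulAction.toPermHom G G b := congrArg Prod.fst hab
    have h2 := congrArg (fun f : Equiv.Perm G => f 1) h1
    simpa using h2
  · intro g x hx
    have h1 := hρ (ρ.symm (i g)) (jL ⟨x, hx⟩)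
    rw [MulEquiv.apply_symm_apply, hact] at h1
    have h2 : semi (i g) (jL ⟨x, hx⟩) = jL (α g ⟨x, hx⟩) := semi_C _ _
    rw [h2] at h1
    have h1' := h1.trans (hφL _)
    rw [← h1']
    change _ = (((ρ.symm (i g)) _ : M) : AlgebraicClosure k)
    congr 2
    apply Subtype.ext
    exact (hφL ⟨x, hx⟩).symm
end HilbAux

set_option synthInstance.maxHeartbeats 1000000
set_option maxHeartbeats 1000000
set_option linter.unusedSectionVars false

namespace HilbAux
open Polynomial

theorem gal_data_aux {R A K F W : Type} [CommRing R] [IsDomain R] [IsIntegrallyClosed R]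
    [CommRing A] [IsDomain A] [IsIntegrallyClosed A] [Algebra R A] [Algebra.IsIntegral R A]
    [Field K] [Field F] [Algebra R K] [IsFractionRing R K] [Algebra A F] [IsFractionRing A F]
    [Algebra K F] [Algebra R F] [IsScalarTower R A F] [IsScalarTower R K F]
    [Field W] [Algebra K W] [Algebra F W] [Algebra R W] [IsScalarTower K F W]
    [IsScalarTower R K W] [IsScalarTower R F W] [FiniteDimensional K W] [IsGalois K W]
    [FiniteDimensional F W] [IsGalois F W] :
    ∃ (S : Type) (_ : CommRing S) (_ : IsDomain S) (_ : Algebra R S) (E : Type) (_ : Group E)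
      (_ : Fintype E) (act : E →* (S ≃ₐ[R] S)) (i : A →ₐ[R] S),
      Function.Injective act ∧ Function.Injective (algebraMap R S) ∧
      (∀ s, (∀ e, act e s = s) → ∃ r, algebraMap R S r = s) ∧ Function.Injective i ∧
      (∀ s, (∀ e, (∀ a, act e (i a) = i a) → act e s = s) → ∃ a, i a = s) ∧
      (∀ σ : A ≃ₐ[R] A, ∃ e, ∀ a, act e (i a) = i (σ a)) := by
  classical
  let S := integralClosure R W
  have hSW : Function.Injective (algebraMap S W) := Subtype.val_injective
  have hFW : Function.Injective (algebraMap F W) := (algebraMap F W).injective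
  have hAF : Function.Injective (algebraMap A F) := IsFractionRing.injective A F
  let i0 : A →ₐ[R] W := (IsScalarTower.toAlgHom R F W).comp (IsScalarTower.toAlgHom R A F)
  let i : A →ₐ[R] S := i0.codRestrict _ fun a => (Algebra.IsIntegral.isIntegral a).map i0
  have hi : ∀ a, algebraMap S W (i a) = algebraMap F W (algebraMap A F a) := fun a => rfl
  have hact : ∀ (e : W ≃ₐ[K] W) (s : S),
      algebraMap S W (galRestrict R K W S e s) = e (algebraMap S W s) :=
    fun e s => algebraMap_galRestrict_apply R e s
  refine ⟨S, inferInstance, inferInstance, inferInstance, W ≃ₐ[K] W, inferInstance,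
    Fintype.ofFinite _, (galRestrict R K W S).toMonoidHom, i,
    (galRestrict R K W S).injective, ?_, ?_, ?_, ?_, ?_⟩
  · have h1 : Function.Injective (algebraMap R W) := by
      rw [IsScalarTower.algebraMap_eq R K W]
      exact (algebraMap K W).injective.comp (IsFractionRing.injective R K)
    rw [IsScalarTower.algebraMap_eq R S W] at h1
    rw [RingHom.coe_comp] at h1
    exact Function.Injective.of_comp h1
  · intro s hs
    have h1 : algebraMap S W s ∈ Set.range (algebraMap K W) := by
      rw [IsGalois.mem_range_algebraMap_iff_fixed]
      intro e
      rw [← hact]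
      exact congrArg _ (hs e)
    obtain ⟨x, hx⟩ := h1
    have h2 : IsIntegral R x := by
      rw [← isIntegral_algebraMap_iff (algebraMap K W).injective, hx]
      exact s.2
    obtain ⟨r, rfl⟩ := IsIntegrallyClosed.algebraMap_eq_of_integral h2
    refine ⟨r, hSW ?_⟩
    rw [← hx, ← IsScalarTower.algebraMap_apply, ← IsScalarTower.algebraMap_apply]
  · intro a b hab
    exact hAF (hFW (congrArg (algebraMap S W) hab))
  · intro s hs
    have h1 : algebraMap S W s ∈ Set.range (algebraMap F W) := by
      rw [IsGalois.mem_range_algebraMap_iff_fixed]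
      intro e
      have := hs (e.restrictScalars K) (fun a => hSW (by
        refine (hact _ _).trans ?_
        rw [hi]
        exact e.commutes _))
      have h2 := congrArg (algebraMap S W) this
      exact (hact _ _).symm.trans h2
    obtain ⟨x, hx⟩ := h1
    have h2 : IsIntegral R x := by
      rw [← isIntegral_algebraMap_iff (algebraMap F W).injective, hx]
      exact s.2
    obtain ⟨a, rfl⟩ := IsIntegrallyClosed.algebraMap_eq_of_integral (h2.tower_top (A := A))
    exact ⟨a, hSW hx⟩
  · intro σ
    let σF : F ≃ₐ[K] F := IsFractionRing.fieldEquivOfAlgEquiv K F F σ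
    refine ⟨σF.liftNormal W, fun a => hSW ?_⟩
    refine (hact _ _).trans ?_
    rw [hi, hi, AlgEquiv.liftNormal_commutes, IsFractionRing.fieldEquivOfAlgEquiv_algebraMap]

theorem gal_data {R A K F : Type} [CommRing R] [IsDomain R] [IsIntegrallyClosed R]
    [CommRing A] [IsDomain A] [IsIntegrallyClosed A] [Algebra R A] [Algebra.IsIntegral R A]
    [Field K] [Field F] [Algebra R K] [IsFractionRing R K] [Algebra A F] [IsFractionRing A F]
    [Algebra K F] [Algebra R F] [IsScalarTower R A F] [IsScalarTower R K F]
    [FiniteDimensional K F] [Algebra.IsSeparable K F] :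
    ∃ (S : Type) (_ : CommRing S) (_ : IsDomain S) (_ : Algebra R S) (E : Type) (_ : Group E)
      (_ : Fintype E) (act : E →* (S ≃ₐ[R] S)) (i : A →ₐ[R] S),
      Function.Injective act ∧ Function.Injective (algebraMap R S) ∧
      (∀ s, (∀ e, act e s = s) → ∃ r, algebraMap R S r = s) ∧ Function.Injective i ∧
      (∀ s, (∀ e, (∀ a, act e (i a) = i a) → act e s = s) → ∃ a, i a = s) ∧
      (∀ σ : A ≃ₐ[R] A, ∃ e, ∀ a, act e (i a) = i (σ a)) := by
  let W := IntermediateField.normalClosure K F (AlgebraicClosure F)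
  have : Algebra.IsAlgebraic K (AlgebraicClosure F) :=
    Algebra.IsAlgebraic.trans K F (AlgebraicClosure F)
  have : IsAlgClosure K (AlgebraicClosure F) := ⟨inferInstance, inferInstance⟩
  have : Normal K (AlgebraicClosure F) := IsAlgClosure.normal K _
  have : Normal K W := normalClosure.normal K F _
  have hsep : Algebra.IsSeparable K W := by
    have hle : W ≤ separableClosure K (AlgebraicClosure F) := by
      refine iSup_le fun f => ?_
      rintro _ ⟨x, rfl⟩
      change f x ∈ _
      rw [mem_separableClosure_iff]
      exact (Algebra.IsSeparable.isSeparable K x).map f f.injective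
    exact (le_separableClosure_iff K _ W).1 hle
  have : IsGalois K W := ⟨⟩
  have : FiniteDimensional K W := normalClosure.is_finiteDimensional K F _
  have : FiniteDimensional F W := FiniteDimensional.right K F W
  have : IsGalois F W := IsGalois.tower_top_of_isGalois K F W
  let : Algebra R W := ((algebraMap K W).comp (algebraMap R K)).toAlgebra
  have h1 : IsScalarTower R K W := IsScalarTower.of_algebraMap_eq fun x => rfl
  have h2 : IsScalarTower R F W := IsScalarTower.of_algebraMap_eq fun x => by
    rw [IsScalarTower.algebraMap_apply R K F, ← IsScalarTower.algebraMap_apply K F W]; rfl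
  exact gal_data_aux (K := K) (F := F) (W := W)

theorem alg_claim {M : Type} [Field M] (w : M[X][X]) (δ : M)
    (h : w ^ 3 - X ^ 3 + C X * (w - X - C (C δ)) = 0) : w = X ∧ δ = 0 := by
  have hb : (w.coeff 0) ^ 3 + X * (w.coeff 0 - C δ) = 0 := by
    have := congrArg (fun p : M[X][X] => eval 0 p) h
    simpa [← coeff_zero_eq_eval_zero] using this
  have hX : (X : M[X]) ∣ w.coeff 0 := by
    have : (X : M[X]) ∣ (w.coeff 0) ^ 3 := ⟨-(w.coeff 0 - C δ), by linear_combination hb⟩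
    exact prime_X.dvd_of_dvd_pow this
  obtain ⟨c, hc⟩ := hX
  have h1 : X ^ 2 * c ^ 3 + X * c - C δ = 0 := by
    have : X * (X ^ 2 * c ^ 3 + X * c - C δ) = 0 := by
      rw [hc] at hb; linear_combination hb
    exact (mul_eq_zero.1 this).resolve_left X_ne_zero
  have hδ : δ = 0 := by
    have := congrArg (eval 0) h1
    simpa using this
  subst hδ
  refine ⟨?_, rfl⟩
  have hc0 : c = 0 := by
    by_contra hc0
    have : c * (X * (X * c ^ 2 + 1)) = 0 := by
      simp only [map_zero] at h1
      linear_combination h1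
    have h3 := ((mul_eq_zero.1 this).resolve_left hc0)
    have h4 := (mul_eq_zero.1 h3).resolve_left X_ne_zero
    have := congrArg (eval 0) h4
    simp at this
  have h5 : (w - X) * (w ^ 2 + w * X + X ^ 2 + C X) = 0 := by
    simp only [map_zero] at h
    linear_combination h
  rcases mul_eq_zero.1 h5 with h6 | h6
  · exact sub_eq_zero.1 h6
  · exfalso
    have := congrArg (fun p : M[X][X] => eval 0 p) h6
    simp [← coeff_zero_eq_eval_zero, hc, hc0] at this

noncomputable def qpol {M : Type} [Field M] (θ : M) : M[X][X] :=
  -(X ^ 3 + C X * (X - C (C θ)))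

theorem qpol_natDegree {M : Type} [Field M] (θ : M) : (qpol θ).natDegree = 3 := by
  unfold qpol
  rw [natDegree_neg, mul_sub, ← C_mul]
  compute_degree!

noncomputable def hhom (k : Type) {M : Type} [Field k] [Field M] [Algebra k M] (θ : M) :
    MvPolynomial (Fin 2) k →ₐ[k] M[X][X] :=
  MvPolynomial.aeval ![qpol θ, C X]

theorem hhom_inj (k : Type) {M : Type} [Field k] [Field M] [Algebra k M] (θ : M) :
    Function.Injective (hhom k θ) := by
  let f1 : MvPolynomial (Fin 1) k →+* M[X] :=
    (mapRingHom (algebraMap k M)).comp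
      (MvPolynomial.uniqueAlgEquiv k (Fin 1) : MvPolynomial (Fin 1) k →+* k[X])
  have hf1 : Function.Injective f1 :=
    (map_injective _ (algebraMap k M).injective).comp
      (MvPolynomial.uniqueAlgEquiv k (Fin 1)).injective
  let f2 : MvPolynomial (Fin 2) k →+* M[X][X] :=
    (mapRingHom f1).comp (MvPolynomial.finSuccEquiv k 1 : MvPolynomial (Fin 2) k →+* _)
  have hf2 : Function.Injective f2 :=
    (map_injective _ hf1).comp (MvPolynomial.finSuccEquiv k 1).injective
  have hfac : (hhom k θ : MvPolynomial (Fin 2) k →+* M[X][X]) =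
      (compRingHom (qpol θ)).comp f2 := by
    apply MvPolynomial.ringHom_ext
    · intro a
      simp [hhom, f2, f1, MvPolynomial.finSuccEquiv_apply,
        MvPolynomial.uniqueAlgEquiv, IsScalarTower.algebraMap_apply k M M[X]]
    · intro a
      fin_cases a
      · simp [hhom, f2, f1, MvPolynomial.finSuccEquiv_X_zero]
      · have : MvPolynomial.finSuccEquiv k 1 (MvPolynomial.X 1) = C (MvPolynomial.X 0) :=
          MvPolynomial.finSuccEquiv_X_succ (R := k) (n := 1) (j := 0)
        simp [hhom, f2, f1, this, MvPolynomial.uniqueAlgEquiv]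
  have hcomp : Function.Injective (compRingHom (qpol θ)) := by
    rw [injective_iff_map_eq_zero]
    intro a ha
    rw [coe_compRingHom_apply] at ha
    rcases comp_eq_zero_iff.1 ha with h | ⟨-, h⟩
    · exact h
    · exfalso
      have := qpol_natDegree θ
      rw [h, natDegree_C] at this
      omega
  have : Function.Injective (hhom k θ : MvPolynomial (Fin 2) k →+* M[X][X]) := by
    rw [hfac]
    exact hcomp.comp hf2
  exact this

theorem mem_of_gens {M : Type} [Field M] (P : Subring M[X][X]) (h0 : ∀ m : M, C (C m) ∈ P)
    (h1 : C X ∈ P) (h2 : X ∈ P) (a : M[X][X]) : a ∈ P := by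
  induction a using Polynomial.induction_on' with
  | add p q hp hq => exact P.add_mem hp hq
  | monomial n b =>
    rw [← C_mul_X_pow_eq_monomial]
    refine P.mul_mem ?_ (P.pow_mem h2 _)
    induction b using Polynomial.induction_on' with
    | add p q hp hq => rw [C_add]; exact P.add_mem hp hq
    | monomial n b =>
      rw [← C_mul_X_pow_eq_monomial, C_mul, C_pow]
      exact P.mul_mem (h0 _) (P.pow_mem h1 _)

theorem sep_of_deriv {K F : Type} [Field K] [Field F] [Algebra K F] [Algebra.IsAlgebraic K F]
    (x : F) (f : K[X]) (h0 : aeval x f = 0) (h1 : aeval x (derivative f) ≠ 0) :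
    IsSeparable K x := by
  have hirr := minpoly.irreducible (Algebra.IsIntegral.isIntegral (R := K) x)
  rw [IsSeparable, separable_iff_derivative_ne_zero hirr]
  intro hd
  obtain ⟨g, rfl⟩ := minpoly.dvd K x h0
  apply h1
  rw [derivative_mul, hd]
  simp

theorem isIntegral_cubic {R A : Type} [CommRing R] [CommRing A] [Algebra R A] (x c d : A)
    (hc : IsIntegral R c) (hd : IsIntegral R d) (h : x ^ 3 + c * x + d = 0) : IsIntegral R x := by
  have : IsIntegral (integralClosure R A) x := by
    let c' : integralClosure R A := ⟨c, hc⟩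
    let d' : integralClosure R A := ⟨d, hd⟩
    refine ⟨X ^ 3 + C c' * X + C d', by monicity!, ?_⟩
    have hc' : algebraMap (integralClosure R A) A c' = c := rfl
    have hd' : algebraMap (integralClosure R A) A d' = d := rfl
    simp only [eval₂_add, eval₂_pow, eval₂_X, eval₂_mul, eval₂_C, hd', hc', h]
  exact isIntegral_trans (R := R) (A := integralClosure R A) _ this

theorem step2_data (k : Type) {M : Type} [Field k] [Field M] [Algebra k M] [FiniteDimensional k M]
    [Algebra.IsSeparable k M] (θ : M) [Algebra (MvPolynomial (Fin 2) k) M[X][X]]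
    (halg : ∀ r, algebraMap (MvPolynomial (Fin 2) k) M[X][X] r = hhom k θ r) :
    ∃ (S : Type) (_ : CommRing S) (_ : IsDomain S) (_ : Algebra (MvPolynomial (Fin 2) k) S)
      (E : Type) (_ : Group E)
      (_ : Fintype E) (act : E →* (S ≃ₐ[MvPolynomial (Fin 2) k] S))
      (i : M[X][X] →ₐ[MvPolynomial (Fin 2) k] S),
      Function.Injective act ∧ Function.Injective (algebraMap (MvPolynomial (Fin 2) k) S) ∧
      (∀ s, (∀ e, act e s = s) → ∃ r, algebraMap (MvPolynomial (Fin 2) k) S r = s) ∧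
      Function.Injective i ∧
      (∀ s, (∀ e, (∀ a, act e (i a) = i a) → act e s = s) → ∃ a, i a = s) ∧
      (∀ σ : M[X][X] ≃ₐ[MvPolynomial (Fin 2) k] M[X][X], ∃ e, ∀ a, act e (i a) = i (σ a)) := by
  let R := MvPolynomial (Fin 2) k
  let A := M[X][X]
  have htower : IsScalarTower k R A := IsScalarTower.of_algebraMap_eq fun x => by
    rw [halg]; exact ((hhom k θ).commutes x).symm
  have hinj : Function.Injective (algebraMap R A) := by
    intro a b hab
    rw [halg, halg] at hab
    exact hhom_inj k θ hab
  have hX1 : algebraMap R A (MvPolynomial.X 1) = C X := by rw [halg]; simp [hhom]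
  have hX0 : algebraMap R A (MvPolynomial.X 0) = qpol θ := by rw [halg]; simp [hhom]
  have hint : Algebra.IsIntegral R A := by
    constructor
    have hM : ∀ m : M, IsIntegral R (C (C m) : A) := by
      intro m
      have h1 : IsIntegral k (algebraMap M A m) := 
        (Algebra.IsIntegral.isIntegral (R := k) m).algebraMap
      exact h1.tower_top
    have hC : IsIntegral R (C X : A) := by rw [← hX1]; exact isIntegral_algebraMap
    have hX : IsIntegral R (X : A) := by
      refine isIntegral_cubic _ (C X) (qpol θ - C X * C (C θ)) hC ?_ ?_
      · refine IsIntegral.sub ?_ (hC.mul (hM θ))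
        rw [← hX0]
        exact isIntegral_algebraMap
      · unfold qpol
        ring
    intro a
    exact mem_of_gens (integralClosure R A).toSubring hM hC hX a
  have hft : Algebra.FiniteType k A := Algebra.FiniteType.trans (S := M) inferInstance inferInstance
  have hft2 : Algebra.FiniteType R A := Algebra.FiniteType.of_restrictScalars_finiteType k R A
  have hfin : Module.Finite R A := Algebra.IsIntegral.finite
  have : FaithfulSMul R A := (faithfulSMul_iff_algebraMap_injective R A).2 hinj
  let K := FractionRing R
  let F := FractionRing A
  let : Algebra K F := FractionRing.liftAlgebra R F
  have : IsScalarTower R K F := FractionRing.isScalarTower_liftAlgebra R F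
  have hKF : FiniteDimensional K F := by infer_instance
  have hAF : Function.Injective (algebraMap A F) := IsFractionRing.injective A F
  have hsep : Algebra.IsSeparable K F := by
    let Q := separableClosure K F
    have hMs : ∀ m : M, algebraMap A F (C (C m)) ∈ Q := by
      intro m
      rw [mem_separableClosure_iff]
      have h0 : IsSeparable k m := Algebra.IsSeparable.isSeparable k m
      let : Algebra k F := inferInstance
      have h1 : IsSeparable k (algebraMap A F (C (C m))) := by
        exact h0.map ((IsScalarTower.toAlgHom k A F).comp (IsScalarTower.toAlgHom k M A))
          (RingHom.injective _)
      have : IsScalarTower k K F := IsScalarTower.of_algebraMap_eq fun x => by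
        rw [IsScalarTower.algebraMap_apply k R K, ← IsScalarTower.algebraMap_apply R K F,
          IsScalarTower.algebraMap_apply R A F, ← IsScalarTower.algebraMap_apply k R A,
          ← IsScalarTower.algebraMap_apply k A F]
      exact h1.tower_top K
    have hRs : ∀ r : R, algebraMap A F (algebraMap R A r) ∈ Q := by
      intro r
      rw [← IsScalarTower.algebraMap_apply, IsScalarTower.algebraMap_apply R K F]
      exact Q.algebraMap_mem _
    have hXs : algebraMap A F X ∈ Q := by
      rw [mem_separableClosure_iff]
      apply IsSeparable.of_algebra_isSeparable_of_isSeparable K (E := Q)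
      let c : Q := ⟨_, hRs (MvPolynomial.X 1)⟩
      let t : Q := ⟨_, hMs θ⟩
      let d : Q := ⟨_, hRs (MvPolynomial.X 0)⟩
      have hd : algebraMap Q F d = algebraMap A F (qpol θ) := by rw [← hX0]; rfl
      have hc : algebraMap Q F c = algebraMap A F (C X) := by rw [← hX1]; rfl
      have ht : algebraMap Q F t = algebraMap A F (C (C θ)) := rfl
      apply sep_of_deriv (K := Q) _ (X ^ 3 + C c * (X - C t) + C d : Polynomial Q)
      · simp only [map_add, map_pow, aeval_X, map_mul, aeval_C, map_sub, hd, hc, ht]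
        simp only [← map_add, ← map_mul, ← map_sub, ← map_pow]
        rw [← map_zero (algebraMap A F)]
        congr 1
        unfold qpol
        ring
      · have : derivative (X ^ 3 + C c * (X - C t) + C d : Polynomial Q) =
            X ^ 2 + X ^ 2 + X ^ 2 + C c := by
          simp only [derivative_add, derivative_X_pow, derivative_mul, derivative_C,
            derivative_sub, derivative_X, map_natCast]
          push_cast
          ring
        rw [this]
        simp only [map_add, map_pow, aeval_X, map_mul, aeval_C, hc]
        simp only [← map_add, ← map_pow]
        intro h
        rw [map_eq_zero_iff _ hAF] at h
        have h' : (X ^ 2 + X ^ 2 + X ^ 2 + C X : M[X][X]) = 0 := h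
        have := congrArg (fun p : M[X][X] => eval 0 p) h'
        simp at this
    have hA : ∀ a : A, algebraMap A F a ∈ Q :=
      mem_of_gens (Q.toSubring.comap (algebraMap A F)) hMs (hX1 ▸ hRs _) hXs
    refine ⟨fun x => ?_⟩
    rw [← mem_separableClosure_iff]
    obtain ⟨a, b, -, rfl⟩ := IsFractionRing.div_surjective (A := A) x
    exact Q.div_mem (hA a) (hA b)
  have : IsIntegrallyClosed R := inferInstance
  exact gal_data (R := R) (A := A) (K := K) (F := F)
end HilbAux

set_option synthInstance.maxHeartbeats 1000000
set_option maxHeartbeats 1000000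
set_option linter.unusedSectionVars false

namespace HilbAux
open Polynomial

theorem mk_beta {k : Type} [Field k] (M : IntermediateField k (AlgebraicClosure k))
    (G : Type) [Group G] (j : G →* (M ≃ₐ[k] M)) (hj : Function.Injective j)
    (x0 : AlgebraicClosure k) (F : IntermediateField k (AlgebraicClosure k))
    (hF : F = IntermediateField.adjoin k ((M : Set (AlgebraicClosure k)) ∪ {x0}))
    (hMF : M ≤ F)
    (hfix : ∀ T : AlgebraicClosure k ≃ₐ[k] AlgebraicClosure k, T x0 ∈ F → T x0 = x0 ∧
      ∃ g, ∀ m : M, T m = (j g m : M))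
    (hex : ∀ g, ∃ T : AlgebraicClosure k ≃ₐ[k] AlgebraicClosure k, T x0 = x0 ∧
      ∀ m : M, T m = (j g m : M)) :
    ∃ β : (F ≃ₐ[k] F) ≃* G, ∀ (σ : F ≃ₐ[k] F) (x : AlgebraicClosure k) (hx : x ∈ M),
      ((σ ⟨x, hMF hx⟩ : F) : AlgebraicClosure k) = ((j (β σ) ⟨x, hx⟩ : M) : AlgebraicClosure k) := by
  have hx0 : x0 ∈ F := by
    rw [hF]; exact IntermediateField.subset_adjoin _ _ (Or.inr rfl)
  have key : ∀ τ : F ≃ₐ[k] F, ((τ ⟨x0, hx0⟩ : F) : AlgebraicClosure k) = x0 ∧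
      ∃ g, ∀ (x : AlgebraicClosure k) (hx : x ∈ M),
      ((τ ⟨x, hMF hx⟩ : F) : AlgebraicClosure k) = ((j g ⟨x, hx⟩ : M) : AlgebraicClosure k) := by
    intro τ
    have hT : ∀ y : F, τ.liftNormal (AlgebraicClosure k) (y : AlgebraicClosure k) = (τ y : F) :=
      fun y => AlgEquiv.liftNormal_commutes τ (AlgebraicClosure k) y
    obtain ⟨h1, g, hg⟩ := hfix (τ.liftNormal (AlgebraicClosure k)) (by
      rw [hT ⟨x0, hx0⟩]; exact SetLike.coe_mem _)
    refine ⟨by rw [← hT]; exact h1, g, fun x hx => ?_⟩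
    rw [← hT]
    exact hg ⟨x, hx⟩
  choose hk0 b hb using key
  let B : (F ≃ₐ[k] F) →* G := MonoidHom.mk' b (by
    intro τ υ
    apply hj
    apply AlgEquiv.ext
    rintro ⟨x, hx⟩
    apply Subtype.ext
    rw [← hb, map_mul, AlgEquiv.mul_apply, AlgEquiv.mul_apply]
    have h2 : υ ⟨x, hMF hx⟩ = ⟨(j (b υ) ⟨x, hx⟩ : M), hMF (SetLike.coe_mem _)⟩ :=
      Subtype.ext (hb υ x hx)
    rw [h2, hb τ _ (SetLike.coe_mem _)])
  have hB : ∀ τ, B τ = b τ := fun _ => rfl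
  have hBinj : Function.Injective B := by
    intro τ υ h
    have h2 : F.val.comp (τ : F →ₐ[k] F) = F.val.comp (υ : F →ₐ[k] F) := by
      apply IntermediateField.algHom_ext_of_eq_adjoin k hF
      rintro x (hx | hx)
      · change ((τ ⟨x, _⟩ : F) : AlgebraicClosure k) = (υ ⟨x, _⟩ : F)
        rw [hb τ x hx, hb υ x hx]
        have h' : b τ = b υ := h
        rw [h']
      · obtain rfl : x = x0 := hx
        exact (hk0 τ).trans (hk0 υ).symm
    ext x
    exact congrArg (fun f => f x) h2
  have hBsurj : Function.Surjective B := by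
    intro g
    obtain ⟨T, hT0, hTm⟩ := hex g
    have hTF : ∀ x ∈ F, T x ∈ F := by
      have : F ≤ F.comap (T : AlgebraicClosure k →ₐ[k] AlgebraicClosure k) := by
        conv_lhs => rw [hF]
        rw [IntermediateField.adjoin_le_iff]
        rintro x (hx | hx)
        · change T x ∈ F
          rw [hTm ⟨x, hx⟩]
          exact hMF (SetLike.coe_mem _)
        · obtain rfl : x = x0 := hx
          change T x ∈ F
          rwa [hT0]
      exact fun x hx => this hx
    let f : F →ₐ[k] F := ((T : AlgebraicClosure k →ₐ[k] AlgebraicClosure k).comp F.val).codRestrict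
      F.toSubalgebra fun x => hTF x x.2
    let τ : F ≃ₐ[k] F := AlgEquiv.ofBijective f (Algebra.IsAlgebraic.algHom_bijective f)
    refine ⟨τ, hj ?_⟩
    apply AlgEquiv.ext
    rintro ⟨x, hx⟩
    apply Subtype.ext
    rw [hB, ← hb, ← hTm]
    rfl
  exact ⟨MulEquiv.ofBijective B ⟨hBinj, hBsurj⟩, fun σ x hx => hb σ x hx⟩

theorem exists_theta {k M : Type} [Field k] [Field M] [Algebra k M] [FiniteDimensional k M]
    [IsGalois k M] (H : Subgroup (M ≃ₐ[k] M)) : ∃ θ : M, ∀ σ, σ θ = θ ↔ σ ∈ H := by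
  obtain ⟨θ, hθ⟩ := Field.exists_primitive_element k (IntermediateField.fixedField H)
  refine ⟨θ, fun σ => ⟨fun h => ?_, fun h => θ.2 ⟨σ, h⟩⟩⟩
  rw [← IntermediateField.fixingSubgroup_fixedField H, IntermediateField.mem_fixingSubgroup_iff]
  have h2 : ((σ : M →ₐ[k] M).comp (IntermediateField.fixedField H).val).comp
      (⊤ : IntermediateField k (IntermediateField.fixedField H)).val =
      ((IntermediateField.fixedField H).val).comp
      (⊤ : IntermediateField k (IntermediateField.fixedField H)).val := by
    apply IntermediateField.algHom_ext_of_eq_adjoin k hθ.symm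
    intro x hx
    obtain rfl : x = θ := hx
    exact h
  intro x hx
  exact congrArg (fun f => f ⟨⟨x, hx⟩, trivial⟩) h2

theorem normal_range {k M S : Type} [Field k] [Field M] [Algebra k M] [Normal k M] [CommRing S]
    [IsDomain S] [Algebra k S] (f g : M →ₐ[k] S) (m : M) : ∃ m', g m = f m' := by
  have h1 := (Normal.splits (F := k) inferInstance m).eq_prod_roots
  have h2 : eval₂ (f : M →+* S) (g m) ((minpoly k m).map (algebraMap k M)) = 0 := by
    rw [eval₂_map]
    have : (f : M →+* S).comp (algebraMap k M) = algebraMap k S := f.comp_algebraMap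
    rw [this, ← aeval_def, aeval_algHom_apply, minpoly.aeval, map_zero]
  rw [h1, ((minpoly.monic (Algebra.IsIntegral.isIntegral m)).map _).leadingCoeff, map_one, one_mul,
    eval₂_multiset_prod, Multiset.prod_eq_zero_iff] at h2
  simp only [Multiset.mem_map] at h2
  obtain ⟨_, ⟨m', -, rfl⟩, h3⟩ := h2
  refine ⟨m', ?_⟩
  rw [eval₂_sub, eval₂_X, eval₂_C] at h3
  exact sub_eq_zero.1 h3

theorem step2 {k : Type} [Field k] (hk : IsHilbertianField k)
    (G : Type) [Group G]
    (M : IntermediateField k (AlgebraicClosure k))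
    [FiniteDimensional k M] [IsGalois k M] (j : G →* (M ≃ₐ[k] M)) (hj : Function.Injective j) :
    ∃ (F : IntermediateField k (AlgebraicClosure k)) (hMF : M ≤ F),
      FiniteDimensional k F ∧ Algebra.IsSeparable k F ∧
      ∃ β : (F ≃ₐ[k] F) ≃* G, ∀ (σ : F ≃ₐ[k] F) (x : AlgebraicClosure k) (hx : x ∈ M),
      ((σ ⟨x, hMF hx⟩ : F) : AlgebraicClosure k) =
        ((j (β σ) ⟨x, hx⟩ : M) : AlgebraicClosure k) := by
  classical
  obtain ⟨θ, hθ⟩ := exists_theta j.range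
  let : Algebra (MvPolynomial (Fin 2) k) (Polynomial (Polynomial M)) := (hhom k θ).toRingHom.toAlgebra
  have halg : ∀ r, algebraMap (MvPolynomial (Fin 2) k) (Polynomial (Polynomial M)) r = hhom k θ r :=
    fun _ => rfl
  have htower : IsScalarTower k (MvPolynomial (Fin 2) k) (Polynomial (Polynomial M)) :=
    IsScalarTower.of_algebraMap_eq fun x => by
      rw [halg]; exact ((hhom k θ).commutes x).symm
  have hX1 : algebraMap (MvPolynomial (Fin 2) k) (Polynomial (Polynomial M)) (MvPolynomial.X 1) = C X := by
    rw [halg]; simp [hhom]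
  have hX0 : algebraMap (MvPolynomial (Fin 2) k) (Polynomial (Polynomial M)) (MvPolynomial.X 0) = qpol θ := by
    rw [halg]; simp [hhom]
  obtain ⟨S, _, _, _, E, _, _, act, i, hact, hRS, hinv, hi, hfixA, hautA⟩ := step2_data k θ halg
  let : Algebra k S := ((algebraMap (MvPolynomial (Fin 2) k) S).comp (algebraMap k _)).toAlgebra
  have htS : IsScalarTower k (MvPolynomial (Fin 2) k) S := IsScalarTower.of_algebraMap_eq fun x => rfl
  let jL : M →ₐ[k] S := (i.restrictScalars k).comp (IsScalarTower.toAlgHom k M (Polynomial (Polynomial M)))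
  have hjL : ∀ m, jL m = i (C (C m)) := fun m => rfl
  let s0 : S := ∏ e : E, if act e (i X) = i X then 1 else (act e (i X) - i X)
  have hs0 : s0 ≠ 0 := by
    refine Finset.prod_ne_zero_iff.2 fun e _ => ?_
    split_ifs with h
    · exact one_ne_zero
    · exact sub_ne_zero.2 h
  obtain ⟨φ, hφ0, hφM, N, hNfin, hNgal, hN, ρ, hρ⟩ := spec_hom act hk two_pos hRS hact hinv s0 hs0 M jL
  have hsepr : ∀ e, φ (act e (i X)) = φ (i X) → act e (i X) = i X := by
    intro e he
    by_contra hne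
    apply hφ0
    rw [map_prod]
    refine Finset.prod_eq_zero (Finset.mem_univ e) ?_
    rw [if_neg hne, map_sub, he, sub_self]
  have hT : ∀ T : AlgebraicClosure k ≃ₐ[k] AlgebraicClosure k, ∃ e, ∀ s, T (φ s) = φ (act e s) := by
    intro T
    refine ⟨ρ (T.restrictNormal N), fun s => ?_⟩
    rw [← hρ]
    exact (AlgEquiv.restrictNormal_commutes T N ⟨φ s, hN s⟩).symm
  have hE : ∀ e, ∃ T : AlgebraicClosure k ≃ₐ[k] AlgebraicClosure k, ∀ s, T (φ s) = φ (act e s) := by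
    intro e
    refine ⟨(ρ.symm e).liftNormal (AlgebraicClosure k), fun s => ?_⟩
    have h1 := hρ (ρ.symm e) s
    rw [MulEquiv.apply_symm_apply] at h1
    rw [← h1]
    exact AlgEquiv.liftNormal_commutes (ρ.symm e) (AlgebraicClosure k) ⟨φ s, hN s⟩
  obtain ⟨x0, hx0⟩ : ∃ x0, x0 = φ (i X) := ⟨_, rfl⟩
  obtain ⟨F, hF⟩ : ∃ F, F = IntermediateField.adjoin k ((M : Set (AlgebraicClosure k)) ∪ {x0}) :=
    ⟨_, rfl⟩
  have hMF : M ≤ F := fun x hx => by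
    rw [hF]; exact IntermediateField.subset_adjoin _ _ (Or.inl hx)
  have hFN : F ≤ N := by
    rw [hF, IntermediateField.adjoin_le_iff]
    rintro x (hx | hx)
    · have := hN (jL ⟨x, hx⟩)
      rw [hφM] at this
      exact this
    · obtain rfl : x = x0 := hx
      rw [hx0]
      exact hN _
  have hfinF : FiniteDimensional k F :=
    FiniteDimensional.of_injective (IntermediateField.inclusion hFN).toLinearMap
      (IntermediateField.inclusion hFN).injective
  have hsepF : Algebra.IsSeparable k F :=
    Algebra.IsSeparable.of_algHom k N (IntermediateField.inclusion hFN)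
  refine ⟨F, hMF, hfinF, hsepF, mk_beta M G j hj x0 F hF hMF ?_ ?_⟩
  · intro T hTF
    obtain ⟨e, he⟩ := hT T
    have hσ : ∀ m : M, T m = (T.restrictNormal M m : M) := fun m =>
      (AlgEquiv.restrictNormal_commutes T M m).symm
    obtain ⟨σ, hσdef⟩ : ∃ σ, σ = T.restrictNormal M := ⟨_, rfl⟩
    rw [← hσdef] at hσ
    have hem : ∀ m, act e (i (C (C m))) = i (C (C (σ m))) := by
      intro m
      let g : M →ₐ[k] S := (((act e).restrictScalars k : S ≃ₐ[k] S) : S →ₐ[k] S).comp jL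
      obtain ⟨m', hm'⟩ := normal_range jL g m
      have h1 : φ (g m) = T m := by
        rw [← hφM m]
        exact (he _).symm
      rw [hm', hφM, hσ] at h1
      obtain rfl : m' = σ m := Subtype.ext h1
      exact hm'
    have hw : ∃ a, i a = act e (i X) := by
      apply hfixA
      intro h hh
      obtain ⟨Th, hTh⟩ := hE h
      have hThF : ∀ x ∈ F, Th x = x := by
        have : (Th : AlgebraicClosure k →ₐ[k] AlgebraicClosure k).comp F.val = F.val := by
          apply IntermediateField.algHom_ext_of_eq_adjoin k hF
          rintro x (hx | hx)
          · change Th x = x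
            have h1 := hTh (jL ⟨x, hx⟩)
            rw [hjL, hh, ← hjL, hφM] at h1
            exact h1
          · obtain rfl : x = x0 := hx
            change Th x = x
            rw [hx0, hTh, hh]
        exact fun x hx => congrArg (fun f => f ⟨x, hx⟩) this
      have h1 : φ (act h (act e (i X))) = T (φ (i X)) := by
        rw [← hTh, ← he, ← hx0, hThF _ hTF]
      have h2 : act h (act e (i X)) = act e (act (e⁻¹ * h * e) (i X)) := by
        rw [← AlgEquiv.mul_apply, ← AlgEquiv.mul_apply, ← map_mul, ← map_mul]
        have h3 : h * e = e * (e⁻¹ * h * e) := by group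
        rw [← h3]
      rw [h2, ← he] at h1
      rw [h2, hsepr _ (T.injective h1)]
    obtain ⟨a, ha⟩ := hw
    have hrel : act e (i (qpol θ)) = i (qpol θ) := by
      rw [← hX0, i.commutes, (act e).commutes]
    have hCX : act e (i (C X)) = i (C X) := by
      rw [← hX1, i.commutes, (act e).commutes]
    have hrel2 : i (-(a ^ 3 + C X * (a - C (C (σ θ))))) = i (qpol θ) := by
      rw [← hrel]
      unfold qpol
      simp only [map_neg, map_add, map_mul, map_sub, map_pow]
      rw [ha, hCX, hem]
    have hrel3 := hi hrel2
    obtain ⟨ha2, hδ⟩ := alg_claim a (σ θ - θ) (by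
      unfold qpol at hrel3
      rw [map_sub, map_sub]
      linear_combination -hrel3)
    refine ⟨?_, ?_⟩
    · rw [hx0, he, ← ha, ha2]
    · obtain ⟨g, hg⟩ := (hθ σ).1 (sub_eq_zero.1 hδ)
      exact ⟨g, fun m => by rw [hσ, hg]⟩
  · intro g
    have hjθ : j g θ = θ := (hθ (j g)).2 ⟨g, rfl⟩
    let e1 : Polynomial (Polynomial M) ≃+* Polynomial (Polynomial M) :=
      mapEquiv (mapEquiv (j g).toRingEquiv)
    have he1C : ∀ m, e1 (C (C m)) = C (C (j g m)) := fun m => by simp [e1]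
    have he1X : e1 X = X := by simp [e1]
    have he1CX : e1 (C X) = C X := by simp [e1]
    have hcomm : ∀ r, e1 (algebraMap (MvPolynomial (Fin 2) k) (Polynomial (Polynomial M)) r) =
        algebraMap (MvPolynomial (Fin 2) k) (Polynomial (Polynomial M)) r := by
      intro r
      have : (e1 : Polynomial (Polynomial M) →+* Polynomial (Polynomial M)).comp
          (algebraMap (MvPolynomial (Fin 2) k) (Polynomial (Polynomial M))) =
          algebraMap (MvPolynomial (Fin 2) k) (Polynomial (Polynomial M)) := by
        apply MvPolynomial.ringHom_ext
        · intro c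
          rw [← MvPolynomial.algebraMap_eq, RingHom.comp_apply, ← IsScalarTower.algebraMap_apply]
          have h1 : algebraMap k (Polynomial (Polynomial M)) c = C (C (algebraMap k M c)) := rfl
          rw [h1]
          refine (he1C _).trans ?_
          rw [AlgEquiv.commutes]
        · intro l
          rw [RingHom.comp_apply]
          fin_cases l
          · change e1 (algebraMap (MvPolynomial (Fin 2) k) _ (MvPolynomial.X 0)) =
              algebraMap (MvPolynomial (Fin 2) k) _ (MvPolynomial.X 0)
            rw [hX0]
            unfold qpol
            simp only [map_neg, map_add, map_mul, map_sub, map_pow, he1X, he1CX, he1C, hjθ]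
          · change e1 (algebraMap (MvPolynomial (Fin 2) k) _ (MvPolynomial.X 1)) =
              algebraMap (MvPolynomial (Fin 2) k) _ (MvPolynomial.X 1)
            rw [hX1, he1CX]
      exact congrArg (fun f => f r) this
    obtain ⟨e, he⟩ := hautA (AlgEquiv.ofRingEquiv (f := e1) hcomm)
    obtain ⟨T, hT⟩ := hE e
    refine ⟨T, ?_, fun m => ?_⟩
    · rw [hx0, hT, he]
      congr 2
    · have h1 := hT (jL m)
      rw [hφM, hjL, he] at h1
      rw [h1]
      have h2 : (AlgEquiv.ofRingEquiv (f := e1) hcomm) (C (C m)) = C (C (j g m)) := he1C m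
      rw [h2, ← hjL, hφM]

theorem main_aux (k : Type) [Field k] (hk : IsHilbertianField k)
    (G : Type) [Group G] [Finite G]
    (L : IntermediateField k (AlgebraicClosure k))
    [FiniteDimensional k L] [IsGalois k L]
    (α : G →* (L ≃ₐ[k] L)) :
    ∃ (F : IntermediateField k (AlgebraicClosure k)) (hLF : L ≤ F),
      FiniteDimensional L (IntermediateField.extendScalars hLF) ∧
      Algebra.IsSeparable L (IntermediateField.extendScalars hLF) ∧
      ∃ β : (F ≃ₐ[k] F) ≃* G,
        ∀ (σ : F ≃ₐ[k] F) (x : AlgebraicClosure k) (hx : x ∈ L),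
          ((σ ⟨x, hLF hx⟩ : F) : AlgebraicClosure k) =
            ((α (β σ) ⟨x, hx⟩ : L) : AlgebraicClosure k) := by
  obtain ⟨M, hLM, _, _, j, hj, hjα⟩ := step1 hk G L α
  obtain ⟨F, hMF, hfin, hsep, β, hβ⟩ := step2 hk G M j hj
  refine ⟨F, hLM.trans hMF, ?_, ?_, β, fun σ x hx => ?_⟩
  · have : FiniteDimensional k (IntermediateField.extendScalars (hLM.trans hMF)) := hfin
    exact FiniteDimensional.right k L _
  · have : Algebra.IsSeparable k (IntermediateField.extendScalars (hLM.trans hMF)) := hsep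
    exact Algebra.isSeparable_tower_top_of_isSeparable k L _
  · rw [← hjα]
    exact hβ σ x (hLM hx)
end HilbAux


/-- **Corollary (split Galois embedding problems over Hilbertian fields, non-normal
solutions).**  Let `k` be a Hilbertian field, `L/k` a finite Galois extension (inside a
fixed algebraic closure), `G` a finite group and `α : G → Gal(L/k)` a surjective
homomorphism admitting a group-theoretic section.  Then there are a finite separable
extension `F` of `L` and an isomorphism `β : Aut(F/k) ≃ G` such that every
`σ ∈ Aut(F/k)` maps `L` onto itself and `σ|_L = α (β σ)`. -/
theorem statement_3 (k : Type) [Field k] (hk : IsHilbertianField k)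
    (G : Type) [Group G] [Finite G]
    (L : IntermediateField k (AlgebraicClosure k))
    [FiniteDimensional k L] [IsGalois k L]
    (α : G →* (L ≃ₐ[k] L)) (hα : Function.Surjective α)
    (α' : (L ≃ₐ[k] L) →* G) (hα' : Function.Injective α')
    (hsec : ∀ s : L ≃ₐ[k] L, α (α' s) = s) :
    ∃ (F : IntermediateField k (AlgebraicClosure k)) (hLF : L ≤ F),
      FiniteDimensional L (IntermediateField.extendScalars hLF) ∧
      Algebra.IsSeparable L (IntermediateField.extendScalars hLF) ∧
      ∃ β : (F ≃ₐ[k] F) ≃* G,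
        ∀ (σ : F ≃ₐ[k] F) (x : AlgebraicClosure k) (hx : x ∈ L),
          ((σ ⟨x, hLF hx⟩ : F) : AlgebraicClosure k) =
            ((α (β σ) ⟨x, hx⟩ : L) : AlgebraicClosure k) := by
  exact HilbAux.main_aux k hk G L α
end

section
/- Let k be a Hilbertian field, α : G → Aut(L/k) a finite embedding problem over k, and T = (T₁,…,Tₙ) a tuple of algebraically independent indeterminates (n ≥ 1). Suppose the induced embedding problem α_{k(T)} over k(T) has a solution with solution field E. Let B denote the integral closure of k[T₁,…,Tₙ] in E. Then the set of points t ∈ kⁿ for which there exists a maximal ideal P of B lying over the ideal ⟨T₁ − t₁, …, Tₙ − tₙ⟩ of k[T₁,…,Tₙ] such that the residue field E_t = B/P (which contains the image of L under the quotient map, since L ⊆ B) is the solution field of a solution to α, is Zariski-dense in kⁿ (i.e., not contained in the zero locus of any nonzero polynomial in k[T₁,…,Tₙ]). -/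
set_option synthInstance.maxHeartbeats 1000000
set_option maxHeartbeats 1000000

open Polynomial in
lemma ES.root_inj {k A C R : Type*} [Field k] [CommRing A] [CommRing C] [IsDomain C] [Field R]
    [Algebra A C] [Algebra k R] (ev : A →+* k) (π : C →+* R)
    (hπ : ∀ a, π (algebraMap A C a) = algebraMap k R (ev a))
    (h : A[X]) (hs : (h.map ev).Separable) (a b : C) (ha : aeval a h = 0) (hb : aeval b h = 0)
    (hab : π a = π b) : a = b := by
  by_contra hne
  have hcomp : π.comp (algebraMap A C) = (algebraMap k R).comp ev := RingHom.ext hπ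
  have h1 : (X - Polynomial.C a : C[X]) ∣ h.map (algebraMap A C) := by
    rw [dvd_iff_isRoot, IsRoot, eval_map_algebraMap, ha]
  obtain ⟨q, hq⟩ := h1
  have h2 : (X - Polynomial.C b : C[X]) ∣ q := by
    rw [dvd_iff_isRoot, IsRoot]
    have : (h.map (algebraMap A C)).eval b = 0 := by rw [eval_map_algebraMap, hb]
    rw [hq] at this
    simp only [eval_mul, eval_sub, eval_X, Polynomial.eval_C, mul_eq_zero] at this
    rcases this with h | h
    · exact absurd (sub_eq_zero.1 h).symm hne
    · exact h
  obtain ⟨q', rfl⟩ := h2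
  have h3 : (h.map ev).map (algebraMap k R) = (X - Polynomial.C (π a)) * ((X - Polynomial.C (π a)) * q'.map π) := by
    rw [Polynomial.map_map, ← hcomp, ← Polynomial.map_map, hq]
    simp [← hab]
  have h4 : ((h.map ev).map (algebraMap k R)).Separable := hs.map
  rw [h3, ← mul_assoc] at h4
  have h5 := h4.of_mul_left.squarefree (X - Polynomial.C (π a)) dvd_rfl
  exact not_isUnit_X_sub_C _ h5

open Polynomial in
lemma ES.galois {k A C R Γ : Type*} [Field k] [CommRing A] [CommRing C] [IsDomain C] [Field R]
    [Algebra A C] [Algebra k R] (ev : A →+* k) (π : C →+* R)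
    (hπ : ∀ a, π (algebraMap A C a) = algebraMap k R (ev a)) (hsurj : Function.Surjective π)
    [Finite Γ] (act : Γ → (C ≃ₐ[A] C)) (y : C) (hinj : Function.Injective fun γ => act γ y)
    (f : A[X]) (hf : f.Monic) (hdeg : f.natDegree = Nat.card Γ) (hy : aeval y f = 0)
    (hirr : Irreducible (f.map ev)) (hs : (f.map ev).Separable)
    (d : A) (hd : ev d ≠ 0) (hd' : ∀ c : C, d • c ∈ Algebra.adjoin A {y}) :
    IsGalois k R ∧ FiniteDimensional k R ∧
    (∀ γ, ∃ τ : R ≃ₐ[k] R, ∀ c, τ (π c) = π (act γ c)) ∧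
    (∀ τ : R ≃ₐ[k] R, ∃ γ, ∀ c, τ (π c) = π (act γ c)) := by
  classical
  have := Fintype.ofFinite Γ
  have hcomp : π.comp (algebraMap A C) = (algebraMap k R).comp ev := RingHom.ext hπ
  have hae : ∀ (c : C) (p : A[X]), π (aeval c p) = aeval (π c) (p.map ev) := by
    intro c p
    rw [aeval_def, hom_eval₂, hcomp, aeval_def, eval₂_map]
  have hsm : ∀ (c : C) (a : A), π (a • c) = algebraMap k R (ev a) * π c := by
    intro c a; rw [Algebra.smul_def, map_mul, hπ]
  have hpoly : ∀ c : C, ∃ p : A[X], d • c = aeval y p := by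
    intro c
    have := hd' c
    rw [Algebra.adjoin_singleton_eq_range_aeval] at this
    obtain ⟨p, hp⟩ := this
    exact ⟨p, hp.symm⟩
  have hdR : algebraMap k R (ev d) ≠ 0 := by simpa using hd
  have hrootC : ∀ γ, aeval (act γ y) f = 0 := by
    intro γ
    rw [aeval_algHom_apply, hy, map_zero]
  have hroot : ∀ γ, aeval (π (act γ y)) (f.map ev) = 0 := by
    intro γ; rw [← hae, hrootC, map_zero]
  have hinj' : Function.Injective fun γ => π (act γ y) := by
    intro γ δ h
    exact hinj (ES.root_inj ev π hπ f hs _ _ (hrootC γ) (hrootC δ) h)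
  have hm : (f.map ev).Monic := hf.map ev
  have hne : (f.map ev).map (algebraMap k R) ≠ 0 := (hm.map _).ne_zero
  set p := (f.map ev).map (algebraMap k R) with hp
  have hpdeg : p.natDegree = Fintype.card Γ := by
    rw [hp, hm.natDegree_map, hf.natDegree_map, hdeg, Nat.card_eq_fintype_card]
  let S : Finset R := Finset.univ.image fun γ => π (act γ y)
  have hScard : S.card = Fintype.card Γ := by
    rw [Finset.card_image_of_injective _ hinj', Finset.card_univ]
  have hSsub : S ⊆ p.roots.toFinset := by
    intro r hr
    obtain ⟨γ, -, rfl⟩ := Finset.mem_image.1 hr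
    rw [Multiset.mem_toFinset, mem_roots hne, IsRoot, eval_map_algebraMap, hroot]
  have hc1 : p.roots.toFinset.card ≤ p.roots.card := Multiset.toFinset_card_le _
  have hc2 := p.card_roots'
  have hc3 := Finset.card_le_card hSsub
  have hSeq : S = p.roots.toFinset := Finset.eq_of_subset_of_card_le hSsub (by omega)
  have hsplit : p.Splits := by rw [splits_iff_card_roots]; omega
  have hroots : ∀ r : R, aeval r (f.map ev) = 0 → ∃ γ, r = π (act γ y) := by
    intro r hr
    have : r ∈ S := by
      rw [hSeq, Multiset.mem_toFinset, mem_roots hne, IsRoot, eval_map_algebraMap, hr]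
    obtain ⟨γ, -, h⟩ := Finset.mem_image.1 this
    exact ⟨γ, h.symm⟩
  have hyroot : aeval (π y) (f.map ev) = 0 := by rw [← hae, hy, map_zero]
  have hsf : IsSplittingField k R (f.map ev) := by
    refine ⟨hsplit, ?_⟩
    rw [eq_top_iff]
    rintro r -
    obtain ⟨c, rfl⟩ := hsurj r
    obtain ⟨q, hq⟩ := hpoly c
    have h1 : algebraMap k R (ev d) * π c = aeval (π y) (q.map ev) := by
      rw [← hsm, hq, hae]
    have h2 : π c = (ev d)⁻¹ • aeval (π y) (q.map ev) := by
      rw [← h1, Algebra.smul_def, map_inv₀, inv_mul_cancel_left₀ hdR]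
    rw [h2]
    refine Subalgebra.smul_mem _ ?_ _
    refine Algebra.adjoin_mono (s := {π y}) ?_ ?_
    · rintro _ rfl
      rw [mem_rootSet]
      exact ⟨hm.ne_zero, hyroot⟩
    · exact aeval_mem_adjoin_singleton _ _
  have hgal : IsGalois k R := IsGalois.of_separable_splitting_field hs
  have hfd : FiniteDimensional k R := IsSplittingField.finiteDimensional R (f.map ev)
  have hkey : ∀ (γ : Γ) (τ : R ≃ₐ[k] R), τ (π y) = π (act γ y) →
      ∀ c, τ (π c) = π (act γ c) := by
    intro γ τ hτ c
    obtain ⟨q, hq⟩ := hpoly c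
    have h1 : algebraMap k R (ev d) * π c = aeval (π y) (q.map ev) := by
      rw [← hsm, hq, hae]
    have h2 : algebraMap k R (ev d) * π (act γ c) = aeval (π (act γ y)) (q.map ev) := by
      rw [← hsm, ← map_smul, hq, ← hae, aeval_algHom_apply]
    have h3 := congrArg τ h1
    rw [map_mul, AlgEquiv.commutes, ← aeval_algHom_apply, hτ, ← h2] at h3
    exact mul_left_cancel₀ hdR h3
  refine ⟨hgal, hfd, ?_, ?_⟩
  · intro γ
    have hconj : IsConjRoot k (π (act γ y)) (π y) := by
      rw [IsConjRoot, ← minpoly.eq_of_irreducible_of_monic hirr (hroot γ) hm,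
        ← minpoly.eq_of_irreducible_of_monic hirr hyroot hm]
    obtain ⟨τ, hτ⟩ := isConjRoot_iff_exists_algEquiv.1 hconj
    exact ⟨τ, hkey γ τ hτ⟩
  · intro τ
    obtain ⟨γ, hγ⟩ := hroots (τ (π y)) (by rw [aeval_algHom_apply, hyroot, map_zero])
    exact ⟨γ, hkey γ τ hγ⟩

lemma ES.lift {k S R : Type*} [Field k] [Field S] [Field R] [Algebra k S] [Algebra k R]
    [Normal k R] (j : S →ₐ[k] R) (τ : S ≃ₐ[k] S) :
    ∃ τ' : R ≃ₐ[k] R, ∀ s, τ' (j s) = j (τ s) := by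
  let : Algebra S R := j.toRingHom.toAlgebra
  have : IsScalarTower k S R := IsScalarTower.of_algebraMap_eq fun x => (j.commutes x).symm
  exact ⟨τ.liftNormal R, fun s => τ.liftNormal_commutes R s⟩

lemma ES.quot {k B Γ : Type*} [Field k] [CommRing B] [Algebra k B] [Group Γ] (P : Ideal B)
    (act : Γ →* (B ≃ₐ[k] B)) (hP : ∀ σ b, b ∈ P → act σ b ∈ P) :
    ∃ ψ : Γ →* ((B ⧸ P) ≃ₐ[k] (B ⧸ P)), ∀ σ b,
      ψ σ (Ideal.Quotient.mk P b) = Ideal.Quotient.mk P (act σ b) := by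
  let m : Γ → ((B ⧸ P) →ₐ[k] (B ⧸ P)) := fun σ =>
    Ideal.quotientMapₐ P (act σ : B →ₐ[k] B) (fun b hb => hP σ b hb)
  have hm : ∀ σ b, m σ (Ideal.Quotient.mk P b) = Ideal.Quotient.mk P (act σ b) :=
    fun σ b => rfl
  have hmul : ∀ σ τ x, m (σ * τ) x = m σ (m τ x) := by
    intro σ τ x
    obtain ⟨b, rfl⟩ := Ideal.Quotient.mk_surjective x
    simp [hm]
  have hone : ∀ x, m 1 x = x := by
    intro x
    obtain ⟨b, rfl⟩ := Ideal.Quotient.mk_surjective x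
    simp [hm]
  refine ⟨⟨⟨fun σ => AlgEquiv.ofAlgHom (m σ) (m σ⁻¹) ?_ ?_, ?_⟩, ?_⟩, ?_⟩
  · ext1 x; simp [← hmul, hone]
  · ext1 x; simp [← hmul, hone]
  · ext x; simp [hone]
  · intro σ τ; ext x; simp [hmul]
  · intro σ b; exact hm σ b

lemma ES.ker_eval {k : Type*} [Field k] {n : ℕ} (t : Fin n → k) :
    RingHom.ker (MvPolynomial.eval t) =
      Ideal.span (Set.range fun i => MvPolynomial.X i - MvPolynomial.C (t i)) := by
  apply le_antisymm
  · intro p hp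
    have h : ∀ p : MvPolynomial (Fin n) k, p - MvPolynomial.C (MvPolynomial.eval t p) ∈
        Ideal.span (Set.range fun i => MvPolynomial.X i - MvPolynomial.C (t i)) := by
      intro p
      rw [← Ideal.Quotient.eq]
      have : (Ideal.Quotient.mkₐ k (Ideal.span (Set.range fun i =>
          (MvPolynomial.X i - MvPolynomial.C (t i) : MvPolynomial (Fin n) k)))) =
          ((Ideal.Quotient.mkₐ k _).comp (Algebra.ofId k _)).comp (MvPolynomial.aeval t) := by
        ext i
        simp only [AlgHom.comp_apply, MvPolynomial.aeval_X, Ideal.Quotient.mkₐ_eq_mk]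
        exact Ideal.Quotient.eq.2 (Ideal.subset_span ⟨i, rfl⟩)
      exact congrArg (fun φ => φ p) this
    have := h p
    rw [RingHom.mem_ker] at hp
    simpa [hp] using this
  · rw [Ideal.span_le]
    rintro _ ⟨i, rfl⟩
    simp

open Polynomial in
/-- integral primitive element with everything needed -/
lemma ES.prim (A K E : Type*) [CommRing A] [IsDomain A] [IsIntegrallyClosed A] [Field K]
    [Algebra A K] [IsFractionRing A K] [Field E] [Algebra K E] [Algebra A E] [IsScalarTower A K E]
    [FiniteDimensional K E] [Algebra.IsSeparable K E] :
    ∃ (pb : PowerBasis K E) (w : integralClosure A E), pb.gen = (w : E) ∧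
      ∃ f : A[X], f.Monic ∧ f.natDegree = Module.finrank K E ∧ aeval w f = 0 ∧
        Irreducible (f.map (algebraMap A K)) ∧ (f.map (algebraMap A K)).Separable ∧
        ∃ d : A, d ≠ 0 ∧ ∀ c : integralClosure A E, d • c ∈ Algebra.adjoin A {w} := by
  obtain ⟨x, hx⟩ := Field.exists_primitive_element K E
  obtain ⟨a, ha, hax⟩ : ∃ a : A, a ≠ 0 ∧ IsIntegral A (a • x) := by
    have hxalg : IsAlgebraic A x := (IsFractionRing.isAlgebraic_iff A K E).2
      (Algebra.IsAlgebraic.isAlgebraic x)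
    obtain ⟨a, ha, h⟩ := hxalg.exists_integral_multiple
    exact ⟨a, ha, h⟩
  have haK : algebraMap A K a ≠ 0 := by
    simpa using ha
  set w : integralClosure A E := ⟨a • x, hax⟩ with hw
  have htop : Algebra.adjoin K {(w : E)} = ⊤ := by
    have hint : IsIntegral K x := Algebra.IsIntegral.isIntegral x
    have h1 : Algebra.adjoin K {x} = ⊤ := by
      rw [← IntermediateField.adjoin_simple_toSubalgebra_of_isAlgebraic hint.isAlgebraic, hx]; rfl
    rw [eq_top_iff, ← h1]
    refine Algebra.adjoin_le ?_
    intro z hz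
    rw [Set.mem_singleton_iff.1 hz, SetLike.mem_coe]
    have : x = (algebraMap A K a)⁻¹ • (w : E) := by
      rw [hw]; simp only
      rw [← algebraMap_smul K a x, inv_smul_smul₀ haK]
    rw [this]
    exact Subalgebra.smul_mem _ (Algebra.self_mem_adjoin_singleton _ _) _
  have hwK : IsIntegral K (w : E) := Algebra.IsIntegral.isIntegral _
  have hwA : IsIntegral A (w : E) := hax
  let pb := PowerBasis.ofAdjoinEqTop hwK htop
  have hgen : pb.gen = (w : E) := rfl
  have hmp := minpoly.isIntegrallyClosed_eq_field_fractions' K hwA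
  refine ⟨pb, w, hgen, minpoly A (w : E), minpoly.monic hwA, ?_, ?_, ?_, ?_, ?_⟩
  · rw [pb.finrank, ← pb.natDegree_minpoly, hgen, hmp, (minpoly.monic hwA).natDegree_map]
  · apply Subtype.ext
    have := Polynomial.aeval_algebraMap_apply E w (minpoly A (w : E))
    have h2 : aeval (algebraMap (integralClosure A E) E w) (minpoly A (w : E)) = 0 :=
      minpoly.aeval A (w : E)
    rw [h2] at this
    exact this.symm
  · rw [← hmp]; exact minpoly.irreducible hwK
  · rw [← hmp]; exact Algebra.IsSeparable.isSeparable K (w : E)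
  · have hdi : IsIntegral A (Algebra.discr K pb.basis) := by
      apply Algebra.discr_isIntegral
      intro i
      rw [pb.coe_basis]
      exact (hwA : IsIntegral A pb.gen).pow _
    obtain ⟨d, hd⟩ := IsIntegrallyClosed.isIntegral_iff.1 hdi
    refine ⟨d, ?_, ?_⟩
    · rintro rfl
      rw [map_zero] at hd
      exact Algebra.discr_not_zero_of_basis K pb.basis hd.symm
    · intro c
      have h := Algebra.discr_mul_isIntegral_mem_adjoin K (B := pb) hwA c.2
      rw [← hd, algebraMap_smul, hgen, Algebra.adjoin_singleton_eq_range_aeval] at h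
      obtain ⟨p, hp⟩ := h
      rw [Algebra.adjoin_singleton_eq_range_aeval]
      refine ⟨p, Subtype.ext ?_⟩
      have h3 := Polynomial.aeval_algebraMap_apply E w p
      exact h3.symm.trans hp

open Polynomial in
theorem ES.core (k A K E F : Type*) [Field k] [CommRing A] [IsDomain A] [IsIntegrallyClosed A]
    [Algebra k A] [Field K] [Algebra A K] [IsFractionRing A K]
    [Field E] [Algebra K E] [Algebra A E] [Algebra k E] [IsScalarTower A K E] [IsScalarTower k A E]
    [FiniteDimensional K E] [Algebra.IsSeparable K E]
    [Field F] [Algebra K F] [Algebra A F] [Algebra k F] [IsScalarTower A K F] [IsScalarTower k A F]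
    [FiniteDimensional K F] [IsGalois K F]
    [Algebra E F] [IsScalarTower K E F] [IsScalarTower A E F]
    (hH : ∀ (f h : A[X]) (g : A), g ≠ 0 →
      Irreducible (f.map (algebraMap A K)) → (f.map (algebraMap A K)).Separable →
      Irreducible (h.map (algebraMap A K)) → (h.map (algebraMap A K)).Separable →
      ∃ ev : A →ₐ[k] k, ev g ≠ 0 ∧ Irreducible (f.map (ev : A →+* k)) ∧
        (f.map (ev : A →+* k)).Separable ∧ (h.map (ev : A →+* k)).Separable)
    (g : A) (hg : g ≠ 0) :
    ∃ ev : A →ₐ[k] k, ev g ≠ 0 ∧ ∃ (P : Ideal (integralClosure A E)) (_ : P.IsMaximal),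
      Ideal.comap (algebraMap A (integralClosure A E)) P = RingHom.ker (ev : A →+* k) ∧
      FiniteDimensional k (integralClosure A E ⧸ P) ∧
      Algebra.IsSeparable k (integralClosure A E ⧸ P) ∧
      ∃ ψ : (E ≃ₐ[K] E) ≃* ((integralClosure A E ⧸ P) ≃ₐ[k] (integralClosure A E ⧸ P)),
        ∀ σ (b b' : integralClosure A E), (b' : E) = σ b →
          ψ σ (Ideal.Quotient.mk P b) = Ideal.Quotient.mk P b' := by
  obtain ⟨pbF, y, hpy, f, hfm, hfd, hfy, hfi, hfs, d, hd0, hd⟩ := ES.prim A K F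
  obtain ⟨pbE, w, hpw, h, hhm, hhd, hhw, hhi, hhs, -⟩ := ES.prim A K E
  obtain ⟨ev, hev, hev1, hev2, hev3⟩ := hH f h (g * d) (mul_ne_zero hg hd0) hfi hfs hhi hhs
  rw [map_mul] at hev
  have hevg := left_ne_zero_of_mul hev
  have hevd := right_ne_zero_of_mul hev
  refine ⟨ev, hevg, ?_⟩
  have hevs : Function.Surjective (ev : A →+* k) := fun x =>
    ⟨algebraMap k A x, by simp⟩
  have hmax : (RingHom.ker (ev : A →+* k)).IsMaximal := RingHom.ker_isMaximal_of_surjective _ hevs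
  -- the ideal upstairs
  have hinjAF : Function.Injective (algebraMap A (integralClosure A F)) := by
    have : Function.Injective (algebraMap A F) := by
      rw [IsScalarTower.algebraMap_eq A K F]
      exact (algebraMap K F).injective.comp (IsFractionRing.injective A K)
    intro a b hab
    exact this (congrArg Subtype.val hab)
  obtain ⟨Q, hQ, hQc⟩ := Ideal.exists_ideal_over_maximal_of_isIntegral
    (S := integralClosure A F) (RingHom.ker (ev : A →+* k))
    (by rw [(RingHom.injective_iff_ker_eq_bot _).1 hinjAF]; exact bot_le)
  let ι : integralClosure A E →ₐ[A] integralClosure A F :=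
    { toFun := fun b => ⟨algebraMap E F b, b.2.algebraMap⟩
      map_one' := by ext; simp
      map_zero' := by ext; simp
      map_mul' := by intros; ext; simp
      map_add' := by intros; ext; simp
      commutes' := by
        intro a; ext
        exact (IsScalarTower.algebraMap_apply A E F a).symm }
  have hι : ∀ b, ((ι b : integralClosure A F) : F) = algebraMap E F b := fun b => rfl
  have hιinj : Function.Injective ι := by
    intro a b hab
    apply Subtype.ext
    apply (algebraMap E F).injective
    rw [← hι, ← hι, hab]
  let P : Ideal (integralClosure A E) := Q.comap ι
  have hPc : Ideal.comap (algebraMap A (integralClosure A E)) P = RingHom.ker (ev : A →+* k) := by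
    rw [← hQc]
    ext a
    simp only [P, Ideal.mem_comap, AlgHom.commutes]
  have hPp : P.IsPrime := Ideal.IsPrime.comap _
  have hPm : P.IsMaximal := by
    apply Ideal.isMaximal_of_isIntegral_of_isMaximal_comap (R := A)
    rw [hPc]; exact hmax
  refine ⟨P, hPm, hPc, ?_⟩
  let : Field (integralClosure A F ⧸ Q) := Ideal.Quotient.field Q
  let π : integralClosure A F →+* (integralClosure A F ⧸ Q) := Ideal.Quotient.mk Q
  have hπ0 : ∀ c, π c = 0 ↔ c ∈ Q := fun c => Ideal.Quotient.eq_zero_iff_mem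
  have hπ : ∀ a, π (algebraMap A (integralClosure A F) a) =
      algebraMap k (integralClosure A F ⧸ Q) ((ev : A →+* k) a) := by
    intro a
    have h1 : algebraMap k (integralClosure A F ⧸ Q) ((ev : A →+* k) a) =
      π (algebraMap A (integralClosure A F) (algebraMap k A (ev a))) := by
      rw [← IsScalarTower.algebraMap_apply k A (integralClosure A F)]; rfl
    rw [h1, ← sub_eq_zero, ← map_sub, ← map_sub, hπ0, ← Ideal.mem_comap, hQc]
    simp
  have hactF : ∀ (γ : F ≃ₐ[K] F) (c : integralClosure A F),
      ((galRestrict A K F (integralClosure A F) γ c : integralClosure A F) : F) = γ c :=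
    fun γ c => algebraMap_galRestrict_apply A γ c
  have hactE : ∀ (γ : E ≃ₐ[K] E) (c : integralClosure A E),
      ((galRestrict A K E (integralClosure A E) γ c : integralClosure A E) : E) = γ c :=
    fun γ c => algebraMap_galRestrict_apply A γ c
  obtain ⟨hG, hFD, hup, hdown⟩ := ES.galois (k := k) (R := integralClosure A F ⧸ Q)
    (ev : A →+* k) π hπ Ideal.Quotient.mk_surjective
    (fun γ : F ≃ₐ[K] F => galRestrict A K F (integralClosure A F) γ) y
    (by
      intro γ δ hγδ
      have := congrArg Subtype.val hγδ
      simp only [hactF, ← hpy] at this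
      apply AlgEquiv.coe_toAlgHom_injective
      exact pbF.algHom_ext this)
    f hfm (by rw [hfd, IsGalois.card_aut_eq_finrank]) hfy hev1 hev2 d hevd hd
  -- the embedding of residue fields
  let j : (integralClosure A E ⧸ P) →ₐ[k] (integralClosure A F ⧸ Q) :=
    Ideal.quotientMapₐ Q (ι.restrictScalars k) le_rfl
  have hj : ∀ b, j (Ideal.Quotient.mk P b) = π (ι b) := fun b => rfl
  let : Field (integralClosure A E ⧸ P) := Ideal.Quotient.field P
  have hjinj : Function.Injective j := j.toRingHom.injective
  have hFDS : FiniteDimensional k (integralClosure A E ⧸ P) :=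
    FiniteDimensional.of_injective j.toLinearMap hjinj
  have hSepS : Algebra.IsSeparable k (integralClosure A E ⧸ P) :=
    Algebra.IsSeparable.of_algHom k (integralClosure A F ⧸ Q) j
  refine ⟨hFDS, hSepS, ?_⟩
  let act : (E ≃ₐ[K] E) →* (integralClosure A E ≃ₐ[k] integralClosure A E) :=
    { toFun := fun σ => (galRestrict A K E (integralClosure A E) σ).restrictScalars k
      map_one' := by rw [map_one]; rfl
      map_mul' := by intro σ τ; rw [map_mul]; rfl }
  have hact : ∀ σ b, ((act σ b : integralClosure A E) : E) = σ b := hactE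
  -- compatibility
  have hcompat : ∀ (γ : F ≃ₐ[K] F) (σ : E ≃ₐ[K] E),
      (∀ e, γ (algebraMap E F e) = algebraMap E F (σ e)) → ∀ b,
      galRestrict A K F (integralClosure A F) γ (ι b) = ι (act σ b) := by
    intro γ σ hγ b
    apply Subtype.ext
    rw [hactF, hι, hι, hact, hγ]
  obtain ⟨ψ, hψ⟩ := ES.quot P act (by
    intro σ b hb
    obtain ⟨τ, hτ⟩ := hup (σ.liftNormal F)
    have h1 := hτ (ι b)
    rw [hcompat _ σ (σ.liftNormal_commutes F)] at h1
    have h2 : π (ι b) = 0 := (hπ0 _).2 hb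
    rw [h2, map_zero] at h1
    exact (hπ0 _).1 h1.symm)
  have hwF : aeval (ι w) h = 0 := by rw [aeval_algHom_apply, hhw, map_zero]
  have hrinj := ES.root_inj (ev : A →+* k) π hπ h hev3
  have hbij : Function.Bijective ψ := by
    constructor
    · rw [injective_iff_map_eq_one]
      intro σ hσ
      have h1 := hψ σ w
      rw [hσ, AlgEquiv.one_apply] at h1
      have h2 := congrArg j h1
      rw [hj, hj] at h2
      have h3 := hrinj _ _ hwF (by
        have e : act σ w = galRestrict A K E (integralClosure A E) σ w := rfl
        rw [e, aeval_algHom_apply, aeval_algHom_apply (galRestrict A K E (integralClosure A E) σ),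
          hhw, map_zero, map_zero]) h2
      have h4 := congrArg Subtype.val (hιinj h3)
      rw [hact, ← hpw] at h4
      apply AlgEquiv.coe_toAlgHom_injective
      exact pbE.algHom_ext h4.symm
    · intro τ
      obtain ⟨τ', hτ'⟩ := ES.lift j τ
      obtain ⟨γ, hγ⟩ := hdown τ'
      obtain ⟨b, hb⟩ := Ideal.Quotient.mk_surjective (τ (Ideal.Quotient.mk P w))
      have h1 : π (galRestrict A K F (integralClosure A F) γ (ι w)) = π (ι b) := by
        rw [← hγ, ← hj, hτ', ← hb, hj]
      have : IsGalois E F := IsGalois.tower_top_of_isGalois K E F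
      have : FiniteDimensional E F := FiniteDimensional.right K E F
      have hroot : ∀ δ : F ≃ₐ[K] F, ∀ c, aeval c h = 0 →
          aeval (galRestrict A K F (integralClosure A F) δ c) h = 0 := by
        intro δ c hc
        rw [aeval_algHom_apply, hc, map_zero]
      have h2 : γ (algebraMap E F w) ∈ (⊥ : IntermediateField E F) := by
        rw [IsGalois.mem_bot_iff_fixed]
        intro η
        obtain ⟨τη, hτη⟩ := hup (η.restrictScalars K)
        have h3 : π (galRestrict A K F (integralClosure A F) (η.restrictScalars K)
            (galRestrict A K F (integralClosure A F) γ (ι w))) =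
            π (galRestrict A K F (integralClosure A F) γ (ι w)) := by
          rw [← hτη, h1, hτη]
          congr 1
          apply Subtype.ext
          rw [hactF, hι]
          exact η.commutes _
        have h4 := hrinj _ _ (hroot _ _ (hroot _ _ hwF)) (hroot _ _ hwF) h3
        have h5 := congrArg Subtype.val h4
        rw [hactF, hactF, hι] at h5
        exact h5
      obtain ⟨e, he⟩ := IntermediateField.mem_bot.1 h2
      have he0 : aeval e (minpoly K pbE.gen) = 0 := by
        apply (algebraMap E F).injective
        rw [map_zero, ← aeval_algebraMap_apply, he, aeval_algHom_apply, aeval_algebraMap_apply,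
          ← hpw, minpoly.aeval, map_zero, map_zero]
      let σ₀ : E →ₐ[K] E := pbE.lift e he0
      let σ : E ≃ₐ[K] E := AlgEquiv.ofBijective σ₀ (Algebra.IsAlgebraic.algHom_bijective σ₀)
      have hσ : ∀ x, γ (algebraMap E F x) = algebraMap E F (σ x) := by
        have : (γ : F →ₐ[K] F).comp (IsScalarTower.toAlgHom K E F) =
            (IsScalarTower.toAlgHom K E F).comp σ₀ := by
          apply pbE.algHom_ext
          simp only [AlgHom.comp_apply, σ₀, pbE.lift_gen]
          rw [hpw]
          exact he.symm
        intro x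
        exact congrArg (fun φ => φ x) this
      refine ⟨σ, ?_⟩
      ext x
      obtain ⟨b', rfl⟩ := Ideal.Quotient.mk_surjective x
      apply hjinj
      rw [hψ, hj, ← hcompat γ σ hσ, ← hγ, ← hj, hτ']
  refine ⟨MulEquiv.ofBijective ψ hbij, ?_⟩
  intro σ b b' hb
  have : b' = act σ b := Subtype.ext (by rw [hb, hact])
  rw [this]
  exact hψ σ b

open Polynomial in
theorem ES.general (k A K E : Type*) [Field k] [CommRing A] [IsDomain A] [IsIntegrallyClosed A]
    [Algebra k A] [Field K] [Algebra A K] [IsFractionRing A K]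
    [Field E] [Algebra K E] [Algebra A E] [Algebra k E] [IsScalarTower A K E] [IsScalarTower k A E]
    [FiniteDimensional K E] [Algebra.IsSeparable K E]
    (hH : ∀ (f h : A[X]) (g : A), g ≠ 0 →
      Irreducible (f.map (algebraMap A K)) → (f.map (algebraMap A K)).Separable →
      Irreducible (h.map (algebraMap A K)) → (h.map (algebraMap A K)).Separable →
      ∃ ev : A →ₐ[k] k, ev g ≠ 0 ∧ Irreducible (f.map (ev : A →+* k)) ∧
        (f.map (ev : A →+* k)).Separable ∧ (h.map (ev : A →+* k)).Separable)
    (g : A) (hg : g ≠ 0) :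
    ∃ ev : A →ₐ[k] k, ev g ≠ 0 ∧ ∃ (P : Ideal (integralClosure A E)) (_ : P.IsMaximal),
      Ideal.comap (algebraMap A (integralClosure A E)) P = RingHom.ker (ev : A →+* k) ∧
      FiniteDimensional k (integralClosure A E ⧸ P) ∧
      Algebra.IsSeparable k (integralClosure A E ⧸ P) ∧
      ∃ ψ : ((integralClosure A E ⧸ P) ≃ₐ[k] (integralClosure A E ⧸ P)) ≃* (E ≃ₐ[K] E),
        ∀ σ (b b' : integralClosure A E), (b' : E) = ψ σ b →
          σ (Ideal.Quotient.mk P b) = Ideal.Quotient.mk P b' := by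
  let N := IntermediateField.normalClosure K E (AlgebraicClosure E)
  let a1 : Algebra A N := ((algebraMap K N).comp (algebraMap A K)).toAlgebra
  let a2 : Algebra k N := ((algebraMap A N).comp (algebraMap k A)).toAlgebra
  have : IsScalarTower A K N := IsScalarTower.of_algebraMap_eq fun x => rfl
  have : IsScalarTower k A N := IsScalarTower.of_algebraMap_eq fun x => rfl
  have : IsScalarTower A E N := IsScalarTower.of_algebraMap_eq fun x => by
    rw [IsScalarTower.algebraMap_apply A K E, ← IsScalarTower.algebraMap_apply K E N]; rfl
  have : FiniteDimensional K N := normalClosure.is_finiteDimensional K E _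
  have : IsGalois K N := by
    have hle : N ≤ separableClosure K (AlgebraicClosure E) := by
      refine normalClosure_le_iff.2 fun φ => ?_
      rintro _ ⟨x, rfl⟩
      rw [mem_separableClosure_iff]
      have := Algebra.IsSeparable.isSeparable K x
      rw [IsSeparable] at this ⊢
      have h2 := minpoly.algHom_eq φ φ.toRingHom.injective x
      exact h2 ▸ this
    have : Algebra.IsSeparable K N := (le_separableClosure_iff K _ N).1 hle
    exact ⟨⟩
  obtain ⟨ev, hev, P, hP, hPc, hfd, hsep, ψ, hψ⟩ := ES.core k A K E N hH g hg
  refine ⟨ev, hev, P, hP, hPc, hfd, hsep, ψ.symm, fun σ b b' hb => ?_⟩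
  have := hψ _ b b' hb
  rwa [ψ.apply_symm_apply] at this

/-- **Specialization of solutions over a Hilbertian field** (Proposition `lemma:0`(1)).
Let `k` be Hilbertian and `α : G → Aut(L/k)` a finite embedding problem over `k`, with
`L` realized inside a fixed algebraic closure `Ω` of `k(T₁,…,Tₙ)`.  Suppose the induced
embedding problem `α_{k(T₁,…,Tₙ)}` has a solution `β` with solution field
`E ⊆ Ω` (so `L ⊆ E`, `E/k(T)` finite separable, and every `σ ∈ Aut(E/k(T))` restricts
on `L` to `α (β σ)`).  Let `B` be the integral closure of `k[T₁,…,Tₙ]` in `E` (the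
hypothesis `hLB` records the fact that `L ⊆ B`).  Then the set of `t ∈ kⁿ` for which
there exists a maximal ideal `P` of `B` lying over `⟨T₁ − t₁, …, Tₙ − tₙ⟩` such that the
residue field `E_t = B ⧸ P` is the solution field of a solution to `α` (via the images
of the elements of `L` under the quotient map) is Zariski-dense in `kⁿ`: it is not
contained in the zero locus of any nonzero `g ∈ k[T₁,…,Tₙ]`. -/
theorem statement_4 (k : Type) [Field k] (hk : IsHilbertianField k)
    (G : Type) [Group G] [Finite G] (n : ℕ) (hn : 0 < n)
    (L : IntermediateField k
      (AlgebraicClosure (FractionRing (MvPolynomial (Fin n) k))))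
    [FiniteDimensional k L] [Algebra.IsSeparable k L]
    (α : G →* (L ≃ₐ[k] L)) (hα : Function.Surjective α)
    (E : IntermediateField (FractionRing (MvPolynomial (Fin n) k))
      (AlgebraicClosure (FractionRing (MvPolynomial (Fin n) k))))
    [FiniteDimensional (FractionRing (MvPolynomial (Fin n) k)) E]
    [Algebra.IsSeparable (FractionRing (MvPolynomial (Fin n) k)) E]
    (hLE : (L : Set (AlgebraicClosure (FractionRing (MvPolynomial (Fin n) k))))
      ⊆ (E : Set (AlgebraicClosure (FractionRing (MvPolynomial (Fin n) k)))))
    (β : (E ≃ₐ[FractionRing (MvPolynomial (Fin n) k)] E) ≃* G)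
    (hβ : ∀ (σ : E ≃ₐ[FractionRing (MvPolynomial (Fin n) k)] E)
        (x : AlgebraicClosure (FractionRing (MvPolynomial (Fin n) k))) (hx : x ∈ L),
      ((σ ⟨x, hLE hx⟩ : E) : AlgebraicClosure (FractionRing (MvPolynomial (Fin n) k))) =
        ((α (β σ) ⟨x, hx⟩ : L) : AlgebraicClosure (FractionRing (MvPolynomial (Fin n) k))))
    (hLB : ∀ (x : AlgebraicClosure (FractionRing (MvPolynomial (Fin n) k))) (hx : x ∈ L),
      (⟨x, hLE hx⟩ : E) ∈ integralClosure (MvPolynomial (Fin n) k) E) :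
    ∀ g : MvPolynomial (Fin n) k, g ≠ 0 →
      ∃ t : Fin n → k, MvPolynomial.eval t g ≠ 0 ∧
        ∃ (P : Ideal (integralClosure (MvPolynomial (Fin n) k) E)) (_ : P.IsMaximal),
          Ideal.comap (algebraMap (MvPolynomial (Fin n) k)
              (integralClosure (MvPolynomial (Fin n) k) E)) P =
            Ideal.span (Set.range fun i => MvPolynomial.X i - MvPolynomial.C (t i)) ∧
          haveI : IsScalarTower k (MvPolynomial (Fin n) k) E :=
            ⟨fun a b c => Subtype.ext (smul_assoc a b
              (c : AlgebraicClosure (FractionRing (MvPolynomial (Fin n) k))))⟩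
          FiniteDimensional k (integralClosure (MvPolynomial (Fin n) k) E ⧸ P) ∧
          Algebra.IsSeparable k (integralClosure (MvPolynomial (Fin n) k) E ⧸ P) ∧
          ∃ β' : ((integralClosure (MvPolynomial (Fin n) k) E ⧸ P) ≃ₐ[k]
              (integralClosure (MvPolynomial (Fin n) k) E ⧸ P)) ≃* G,
            ∀ (σ : (integralClosure (MvPolynomial (Fin n) k) E ⧸ P) ≃ₐ[k]
                (integralClosure (MvPolynomial (Fin n) k) E ⧸ P))
              (x : AlgebraicClosure (FractionRing (MvPolynomial (Fin n) k))) (hx : x ∈ L),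
              σ (Ideal.Quotient.mk P ⟨⟨x, hLE hx⟩, hLB x hx⟩) =
                Ideal.Quotient.mk P ⟨⟨((α (β' σ) ⟨x, hx⟩ : L)
                    : AlgebraicClosure (FractionRing (MvPolynomial (Fin n) k))),
                  hLE (α (β' σ) ⟨x, hx⟩).2⟩,
                  hLB _ (α (β' σ) ⟨x, hx⟩).2⟩ := by
  intro g hg
  have : IsScalarTower k (MvPolynomial (Fin n) k) E :=
    ⟨fun a b c => Subtype.ext (smul_assoc a b
      (c : AlgebraicClosure (FractionRing (MvPolynomial (Fin n) k))))⟩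
  obtain ⟨ev, hev, P, hP, hPc, hfd, hsep, ψ, hψ⟩ := ES.general k (MvPolynomial (Fin n) k)
    (FractionRing (MvPolynomial (Fin n) k)) E (by
      intro f h g hg hf1 hf2 hh1 hh2
      obtain ⟨t, ht, htt⟩ := hk n hn 2 ![f, h] g hg (by
        intro i
        fin_cases i
        · exact ⟨hf1, hf2⟩
        · exact ⟨hh1, hh2⟩)
      have he : ((MvPolynomial.aeval t : MvPolynomial (Fin n) k →ₐ[k] k) :
          MvPolynomial (Fin n) k →+* k) = MvPolynomial.eval t :=
        MvPolynomial.coe_aeval_eq_eval t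
      refine ⟨MvPolynomial.aeval t, ?_, ?_⟩
      · rw [MvPolynomial.aeval_eq_eval]
        exact ht
      · rw [he]
        exact ⟨(htt 0).1, (htt 0).2, (htt 1).2⟩) g hg
  let t : Fin n → k := fun i => ev (MvPolynomial.X i)
  have he : (ev : MvPolynomial (Fin n) k →+* k) = MvPolynomial.eval t := by
    have : ev = MvPolynomial.aeval t := MvPolynomial.aeval_unique ev
    rw [this]
    exact MvPolynomial.coe_aeval_eq_eval t
  refine ⟨t, ?_, P, hP, ?_, hfd, hsep, ψ.trans β, ?_⟩
  · rw [← he]; exact hev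
  · rw [hPc, he, ES.ker_eval]
  · intro σ x hx
    exact hψ σ _ _ (Subtype.ext (hβ (ψ σ) x hx).symm)
end
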